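/- Define the integer sequence a : ℕ → ℤ by the initial values (a(0), a(1), …, a(15)) = (−83, 35, −19, 1, −5, 1, −1, 0, 1, 1, 5, 1, 19, 35, 83, 73) and the recurrence a(n+16) − a(n+15) − 2a(n+13) − 16a(n+12) + 10a(n+11) − 2a(n+10) + 16a(n+9) + 50a(n+8) − 16a(n+7) − 2a(n+6) − 10a(n+5) − 16a(n+4) + 2a(n+3) + a(n+1) + a(n) = 0 for all n ≥ 0. Then for every integer n ≥ 9, τ(GP(n,4)) = n · a(n+7)². -/

import Mathlib

open Polynomial

/-- The defining relation for the generalized Petersen graph `GP(n,k)`: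
`u_i ~ u_{i+1}`, `u_i ~ v_i`, `v_i ~ v_{i+k}` (indices mod `n`);
`Sum.inl i` is the outer vertex `u_i`, `Sum.inr i` the inner vertex `v_i`. -/
def gpRel (n k : ℕ) : (ZMod n ⊕ ZMod n) → (ZMod n ⊕ ZMod n) → Prop
  | Sum.inl i, Sum.inl j => j = i + 1
  | Sum.inl i, Sum.inr j => j = i
  | Sum.inr _, Sum.inl _ => False
  | Sum.inr i, Sum.inr j => j = i + (k : ZMod n)

instance (n k : ℕ) : DecidableRel (gpRel n k) := fun a b =>
  match a, b with
  | Sum.inl i, Sum.inl j => inferInstanceAs (Decidable (j = i + 1))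
  | Sum.inl i, Sum.inr j => inferInstanceAs (Decidable (j = i))
  | Sum.inr _, Sum.inl _ => inferInstanceAs (Decidable False)
  | Sum.inr i, Sum.inr j => inferInstanceAs (Decidable (j = i + (k : ZMod n)))

/-- The generalized Petersen graph `GP(n,k)`. -/
def genPetersen (n k : ℕ) : SimpleGraph (ZMod n ⊕ ZMod n) :=
  SimpleGraph.fromRel (gpRel n k)

instance (n k : ℕ) : DecidableRel (genPetersen n k).Adj := fun a b =>
  inferInstanceAs (Decidable (a ≠ b ∧ (gpRel n k a b ∨ gpRel n k b a)))

/-- The number of spanning trees of a graph `G`: the number of subgraphs that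
contain all vertices and are trees. -/
noncomputable def numSpanningTrees {V : Type*} (G : SimpleGraph V) : ℕ :=
  Nat.card {H : G.Subgraph // H.IsSpanning ∧ H.coe.IsTree}

lemma gp_quartic {K : Type*} [CommRing K] (A B T p q m n : K)
    (hA : A ^ 2 = p * A - m) (hB : B ^ 2 = q * B - n)
    (hT : T ^ 2 = A * B * T - A ^ 2 - B ^ 2 + 4) (e1 e2 e3 P : K)
    (he1 : e1 = m + n + 8) (he2 : e2 = p ^ 2 + q ^ 2 + (m + 4) * (n + 4))
    (he3 : e3 = p ^ 2 * (n + 4) + q ^ 2 * (m + 4)) (hP : P = p * q) :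
    (256) + (-48)*P^2 + (-32)*e3 + (1)*e3^2 + (-4)*e2*P^2 + (-256)*e1 + (8)*e1*P^2 + (16)*e1*e3 + (96)*e1^2 + (1)*e1^2*P^2 + (-2)*e1^2*e3 + (-16)*e1^3 + (1)*e1^4 + (-320)*T*P + (4)*T*P^3 + (-4)*T*e3*P + (-32)*T*e2*P + (144)*T*e1*P + (-1)*T*e1*e3*P + (8)*T*e1*e2*P + (-12)*T*e1^2*P + (-1)*T*e1^3*P + (-256)*T^2 + (56)*T^2*P^2 + (-32)*T^2*e3 + (-32)*T^2*e2 + (1)*T^2*e2*P^2 + (-2)*T^2*e2*e3 + (192)*T^2*e1 + (-10)*T^2*e1*P^2 + (4)*T^2*e1*e3 + (16)*T^2*e1*e2 + (-48)*T^2*e1^2 + (1)*T^2*e1^2*e3 + (-2)*T^2*e1^2*e2 + (4)*T^2*e1^3 + (144)*T^3*P + (-1)*T^3*P^3 + (3)*T^3*e3*P + (4)*T^3*e2*P + (-56)*T^3*e1*P + (-1)*T^3*e1*e2*P + (5)*T^3*e1^2*P + (96)*T^4 + (-7)*T^4*P^2 + (6)*T^4*e3 + (16)*T^4*e2 + (1)*T^4*e2^2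 + (-48)*T^4*e1 + (1)*T^4*e1*P^2 + (-2)*T^4*e1*e3 + (-4)*T^4*e1*e2 + (6)*T^4*e1^2 + (-12)*T^5*P + (-1)*T^5*e2*P + (5)*T^5*e1*P + (-16)*T^6 + (1)*T^6*e3 + (-2)*T^6*e2 + (4)*T^6*e1 + (-1)*T^7*P + (1)*T^8 = 0 := by
  obtain ⟨X, hX⟩ : ∃ X, X = T ^ 2 - (m + n + 4) := ⟨_, rfl⟩
  have hN : X + q * B - A * (T * B - p) = 0 := by
    rw [hX]; linear_combination hT - hA - hB
  obtain ⟨k2, hk2⟩ : ∃ k2, k2 = q ^ 2 - p * q * T + m * T ^ 2 := ⟨_, rfl⟩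
  obtain ⟨k1, hk1⟩ : ∃ k1, k1 = 2 * q * X - p * T * X + p ^ 2 * q - 2 * p * m * T := ⟨_, rfl⟩
  obtain ⟨k0, hk0⟩ : ∃ k0, k0 = X ^ 2 + p ^ 2 * X + m * p ^ 2 := ⟨_, rfl⟩
  have hG : k0 + k1 * B + k2 * B ^ 2 = 0 := by
    rw [hk0, hk1, hk2]
    linear_combination (X + q * B - (p - A) * (T * B - p)) * hN + (T * B - p) ^ 2 * hA
  have hG2 : (k0 - n * k2) + (k1 + q * k2) * B = 0 := by
    linear_combination hG - k2 * hB
  have hF : (k0 - n * k2) ^ 2 + q * (k0 - n * k2) * (k1 + q * k2) + n * (k1 + q * k2) ^ 2 = 0 := by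
    linear_combination ((k0 - n * k2) + (k1 + q * k2) * (q - B)) * hG2 + (k1 + q * k2) ^ 2 * hB
  rw [← hF, hk0, hk1, hk2, hX, he1, he2, he3, hP]
  ring

lemma gp_char_root {K : Type*} [CommRing K] (s1 s2 s3 s4 r1 r2 r3 r4 : K)
    (h1 : s1 * r1 = 1) (h2 : s2 * r2 = 1) (h3 : s3 * r3 = 1) (h4 : s4 * r4 = 1)
    (y1 y2 y3 y4 P x : K) (hy1 : y1 = s1 + r1) (hy2 : y2 = s2 + r2) (hy3 : y3 = s3 + r3)
    (hy4 : y4 = s4 + r4)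
    (he1 : y1 ^ 2 + y2 ^ 2 + y3 ^ 2 + y4 ^ 2 = 9)
    (he2 : y1 ^ 2 * y2 ^ 2 + y3 ^ 2 * y4 ^ 2 + (y1 ^ 2 + y2 ^ 2) * (y3 ^ 2 + y4 ^ 2) = 24)
    (he3 : y1 ^ 2 * y2 ^ 2 * (y3 ^ 2 + y4 ^ 2) + y3 ^ 2 * y4 ^ 2 * (y1 ^ 2 + y2 ^ 2) = 20)
    (hP : P = y1 * y2 * y3 * y4) (hP2 : P ^ 2 = -1) (hx : x = -P * (s1 * s2 * s3 * s4)) :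
    x ^ 16 - x ^ 15 - 2 * x ^ 13 - 16 * x ^ 12 + 10 * x ^ 11 - 2 * x ^ 10 + 16 * x ^ 9
      + 50 * x ^ 8 - 16 * x ^ 7 - 2 * x ^ 6 - 10 * x ^ 5 - 16 * x ^ 4 + 2 * x ^ 3 + x + 1 = 0 := by
  have hA : ∀ s r t u : K, s * r = 1 → t * u = 1 →
      (s * t + r * u) ^ 2 = (s + r) * (t + u) * (s * t + r * u)
        - ((s + r) ^ 2 + (t + u) ^ 2 - 4) := by
    intro s r t u h h'
    linear_combination (-(t * t + u * u) + 2) * h + (-(s * s + r * r) + 2) * h'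
  have hA' := hA s1 r1 s2 r2 h1 h2
  have hB' := hA s3 r3 s4 r4 h3 h4
  have hs : (s1 * s2) * (r1 * r2) = 1 := by linear_combination s2 * r2 * h1 + h2
  have hs' : (s3 * s4) * (r3 * r4) = 1 := by linear_combination s4 * r4 * h3 + h4
  have hT' := hA (s1 * s2) (r1 * r2) (s3 * s4) (r3 * r4) hs hs'
  obtain ⟨a, ha⟩ : ∃ a, a = s1 * s2 * (s3 * s4) := ⟨_, rfl⟩
  obtain ⟨b, hb⟩ : ∃ b, b = r1 * r2 * (r3 * r4) := ⟨_, rfl⟩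
  have hab : a * b = 1 := by
    rw [ha, hb]; linear_combination s3 * s4 * (r3 * r4) * hs + hs'
  rw [← ha, ← hb] at hT'
  rw [← hy1, ← hy2] at hA'
  rw [← hy3, ← hy4] at hB'
  have := gp_quartic (s1 * s2 + r1 * r2) (s3 * s4 + r3 * r4) (a + b) (y1 * y2) (y3 * y4)
    (y1 ^ 2 + y2 ^ 2 - 4) (y3 ^ 2 + y4 ^ 2 - 4) hA' hB' (by rw [hT']; ring) 9 24 20 P
    (by rw [← he1]; ring) (by rw [← he2]; ring) (by rw [← he3]; ring) (by rw [hP]; ring)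
  obtain ⟨T, hT⟩ : ∃ T, T = a + b := ⟨_, rfl⟩
  rw [← hT] at this
  have hx' : x = -P * a := by rw [hx, ha]; ring
  have hxx : x * (-(P * T)) = x ^ 2 - 1 := by
    rw [hx', hT]; linear_combination P ^ 2 * hab + hP2
  obtain ⟨d, hd⟩ : ∃ d, d = -(P * T) := ⟨_, rfl⟩
  have hTd : T = P * d := by rw [hd]; linear_combination T * hP2
  rw [← hd] at hxx
  rw [hTd] at this
  have hg : 16 + 29 * d - 50 * d ^ 2 - 14 * d ^ 3 + 4 * d ^ 4 - 9 * d ^ 5 + 8 * d ^ 6 - d ^ 7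
      + d ^ 8 = 0 := by
    linear_combination this - ((9)*P^0*d^0 + (-29)*P^0*d^1 + (4)*P^2*d^1 + (50)*P^0*d^2 + (-10)*P^2*d^2 + (14)*P^0*d^3 + (-14)*P^2*d^3 + (-1)*P^4*d^3 + (-4)*P^0*d^4 + (4)*P^2*d^4 + (2)*P^4*d^4 + (9)*P^0*d^5 + (-9)*P^2*d^5 + (9)*P^4*d^5 + (-8)*P^0*d^6 + (8)*P^2*d^6 + (-8)*P^4*d^6 + (1)*P^0*d^7 + (-1)*P^2*d^7 + (1)*P^4*d^7 + (-1)*P^6*d^7 + (-1)*P^0*d^8 + (1)*P^2*d^8 + (-1)*P^4*d^8 + (1)*P^6*d^8) * hP2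
  have hk : ∀ k : ℕ, (x * d) ^ k = (x ^ 2 - 1) ^ k := fun k => by rw [hxx]
  linear_combination x ^ 8 * hg - ((29) * x ^ 7 * hk 1 + (-50) * x ^ 6 * hk 2 + (-14) * x ^ 5 * hk 3 + (4) * x ^ 4 * hk 4 + (-9) * x ^ 3 * hk 5 + (8) * x ^ 2 * hk 6 + (-1) * x ^ 1 * hk 7 + (1) * x ^ 0 * hk 8)

lemma gp_prod_lin {K : Type*} [CommRing K] (w1 w2 w3 w4 c : K)
    (e1 : w1 + w2 + w3 + w4 = 1)
    (e2 : w1 * w2 + w1 * w3 + w1 * w4 + w2 * w3 + w2 * w4 + w3 * w4 = -6)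
    (e3 : w1 * w2 * w3 + w1 * w2 * w4 + w1 * w3 * w4 + w2 * w3 * w4 = 0)
    (e4 : w1 * w2 * w3 * w4 = -1) :
    (w1 + c) * (w2 + c) * (w3 + c) * (w4 + c) = c ^ 4 + c ^ 3 - 6 * c ^ 2 - 1 := by
  linear_combination c ^ 3 * e1 + c ^ 2 * e2 + c * e3 + e4

lemma gp_prod_quad {K : Type*} [CommRing K] (w1 w2 w3 w4 : K)
    (e1 : w1 + w2 + w3 + w4 = 1)
    (e2 : w1 * w2 + w1 * w3 + w1 * w4 + w2 * w3 + w2 * w4 + w3 * w4 = -6)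
    (e3 : w1 * w2 * w3 + w1 * w2 * w4 + w1 * w3 * w4 + w2 * w3 * w4 = 0)
    (e4 : w1 * w2 * w3 * w4 = -1) :
    (w1 ^ 2 + w1 - 1) * (w2 ^ 2 + w2 - 1) * (w3 ^ 2 + w3 - 1) * (w4 ^ 2 + w4 - 1) = 19 ∧
    (w1 ^ 2 - 2) * (w2 ^ 2 - 2) * (w3 ^ 2 - 2) * (w4 ^ 2 - 2) = 73 ∧
    (w1 ^ 3 + w1 ^ 2 - 2 * w1 - 1) * (w2 ^ 3 + w2 ^ 2 - 2 * w2 - 1) *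
      (w3 ^ 3 + w3 ^ 2 - 2 * w3 - 1) * (w4 ^ 3 + w4 ^ 2 - 2 * w4 - 1) = -83 := by
  refine ⟨?_, ?_, ?_⟩
  · have : ∀ e1 e2 e3 e4 : K, e1 = (w1 + w2 + w3 + w4) →
        e2 = (w1 * w2 + w1 * w3 + w1 * w4 + w2 * w3 + w2 * w4 + w3 * w4) →
        e3 = (w1 * w2 * w3 + w1 * w2 * w4 + w1 * w3 * w4 + w2 * w3 * w4) → e4 = (w1 * w2 * w3 * w4) →
        (w1 ^ 2 + w1 - 1) * (w2 ^ 2 + w2 - 1) * (w3 ^ 2 + w3 - 1) * (w4 ^ 2 + w4 - 1)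
          = (1) + (7)*e4^1 + (1)*e4^2 + (-4)*e3^1 + (1)*e3^1*e4^1 + (-1)*e3^2 + (3)*e2^1 + (3)*e2^1*e4^1 + (-1)*e2^1*e3^1 + (1)*e2^2 + (-1)*e1^1 + (4)*e1^1*e4^1 + (-3)*e1^1*e3^1 + (1)*e1^1*e2^1 + (-1)*e1^2 := by
      intro e1 e2 e3 e4 h1 h2 h3 h4
      rw [h1, h2, h3, h4]; ring
    rw [this _ _ _ _ e1.symm e2.symm e3.symm e4.symm]; norm_num
  · have : ∀ e1 e2 e3 e4 : K, e1 = (w1 + w2 + w3 + w4) →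
        e2 = (w1 * w2 + w1 * w3 + w1 * w4 + w2 * w3 + w2 * w4 + w3 * w4) →
        e3 = (w1 * w2 * w3 + w1 * w2 * w4 + w1 * w3 * w4 + w2 * w3 * w4) → e4 = (w1 * w2 * w3 * w4) →
        (w1 ^ 2 - 2) * (w2 ^ 2 - 2) * (w3 ^ 2 - 2) * (w4 ^ 2 - 2)
          = (16) + (8)*e4^1 + (1)*e4^2 + (-2)*e3^2 + (16)*e2^1 + (4)*e2^1*e4^1 + (4)*e2^2 + (-8)*e1^1*e3^1 + (-8)*e1^2 := by
      intro e1 e2 e3 e4 h1 h2 h3 h4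
      rw [h1, h2, h3, h4]; ring
    rw [this _ _ _ _ e1.symm e2.symm e3.symm e4.symm]; norm_num
  · have : ∀ e1 e2 e3 e4 : K, e1 = (w1 + w2 + w3 + w4) →
        e2 = (w1 * w2 + w1 * w3 + w1 * w4 + w2 * w3 + w2 * w4 + w3 * w4) →
        e3 = (w1 * w2 * w3 + w1 * w2 * w4 + w1 * w3 * w4 + w2 * w3 * w4) → e4 = (w1 * w2 * w3 * w4) →
        (w1 ^ 3 + w1 ^ 2 - 2 * w1 - 1) * (w2 ^ 3 + w2 ^ 2 - 2 * w2 - 1) * (w3 ^ 3 + w3 ^ 2 - 2 * w3 - 1) * (w4 ^ 3 + w4 ^ 2 - 2 * w4 - 1)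
          = (1) + (26)*e4^1 + (13)*e4^2 + (1)*e4^3 + (11)*e3^1 + (-3)*e3^1*e4^1 + (1)*e3^1*e4^2 + (-4)*e3^2 + (-2)*e3^2*e4^1 + (-1)*e3^3 + (6)*e2^1 + (27)*e2^1*e4^1 + (5)*e2^1*e4^2 + (9)*e2^1*e3^1 + (1)*e2^1*e3^1*e4^1 + (-1)*e2^1*e3^2 + (5)*e2^2 + (6)*e2^2*e4^1 + (2)*e2^2*e3^1 + (1)*e2^3 + (2)*e1^1 + (-5)*e1^1*e4^1 + (4)*e1^1*e4^2 + (-4)*e1^1*e3^1 + (-9)*e1^1*e3^1*e4^1 + (-5)*e1^1*e3^2 + (1)*e1^1*e2^1 + (4)*e1^1*e2^1*e4^1 + (-1)*e1^1*e2^1*e3^1 + (1)*e1^1*e2^2 + (-1)*e1^2 + (-11)*e1^2*e4^1 + (-6)*e1^2*e3^1 + (-2)*e1^2*e2^1 + (-1)*e1^3 := by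
      intro e1 e2 e3 e4 h1 h2 h3 h4
      rw [h1, h2, h3, h4]; ring
    rw [this _ _ _ _ e1.symm e2.symm e3.symm e4.symm]; norm_num

/-- The solution of the recurrence in closed form. -/
lemma gp_seq {K : Type*} [CommRing K] (s1 s2 s3 s4 r1 r2 r3 r4 : K)
    (h1 : s1 * r1 = 1) (h2 : s2 * r2 = 1) (h3 : s3 * r3 = 1) (h4 : s4 * r4 = 1)
    (P : K)
    (he1 : (s1 + r1) ^ 2 + (s2 + r2) ^ 2 + (s3 + r3) ^ 2 + (s4 + r4) ^ 2 = 9)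
    (he2 : (s1 + r1) ^ 2 * (s2 + r2) ^ 2 + (s3 + r3) ^ 2 * (s4 + r4) ^ 2
      + ((s1 + r1) ^ 2 + (s2 + r2) ^ 2) * ((s3 + r3) ^ 2 + (s4 + r4) ^ 2) = 24)
    (he3 : (s1 + r1) ^ 2 * (s2 + r2) ^ 2 * ((s3 + r3) ^ 2 + (s4 + r4) ^ 2)
      + (s3 + r3) ^ 2 * (s4 + r4) ^ 2 * ((s1 + r1) ^ 2 + (s2 + r2) ^ 2) = 20)
    (hP : P = (s1 + r1) * (s2 + r2) * (s3 + r3) * (s4 + r4)) (hP2 : P ^ 2 = -1)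
    (c : ℕ → K) (hc : ∀ m, c m = (-P) ^ (m + 1) * ((s1 ^ m * r1 ^ 7 - r1 ^ m * s1 ^ 7) *
      (s2 ^ m * r2 ^ 7 - r2 ^ m * s2 ^ 7) * (s3 ^ m * r3 ^ 7 - r3 ^ m * s3 ^ 7) *
      (s4 ^ m * r4 ^ 7 - r4 ^ m * s4 ^ 7))) (n : ℕ) :
    c (n + 16) - c (n + 15) - 2 * c (n + 13) - 16 * c (n + 12) + 10 * c (n + 11)
        - 2 * c (n + 10) + 16 * c (n + 9) + 50 * c (n + 8) - 16 * c (n + 7)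
        - 2 * c (n + 6) - 10 * c (n + 5) - 16 * c (n + 4) + 2 * c (n + 3)
        + c (n + 1) + c n = 0 := by
  have key : ∀ t1 t2 t3 t4 u1 u2 u3 u4 : K, t1 * u1 = 1 → t2 * u2 = 1 → t3 * u3 = 1 →
      t4 * u4 = 1 → s1 + r1 = t1 + u1 → s2 + r2 = t2 + u2 → s3 + r3 = t3 + u3 →
      s4 + r4 = t4 + u4 → ∀ x, x = -P * (t1 * t2 * t3 * t4) →
      x ^ (n + 16) - x ^ (n + 15) - 2 * x ^ (n + 13) - 16 * x ^ (n + 12) + 10 * x ^ (n + 11)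
        - 2 * x ^ (n + 10) + 16 * x ^ (n + 9) + 50 * x ^ (n + 8) - 16 * x ^ (n + 7)
        - 2 * x ^ (n + 6) - 10 * x ^ (n + 5) - 16 * x ^ (n + 4) + 2 * x ^ (n + 3)
        + x ^ (n + 1) + x ^ n = 0 := by
    intro t1 t2 t3 t4 u1 u2 u3 u4 g1 g2 g3 g4 f1 f2 f3 f4 x hx
    have := gp_char_root t1 t2 t3 t4 u1 u2 u3 u4 g1 g2 g3 g4 _ _ _ _ P x f1 f2 f3 f4 he1 he2 he3
      hP hP2 hx
    linear_combination x ^ n * this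
  have g1 : r1 * s1 = 1 := by rw [mul_comm, h1]
  have g2 : r2 * s2 = 1 := by rw [mul_comm, h2]
  have g3 : r3 * s3 = 1 := by rw [mul_comm, h3]
  have g4 : r4 * s4 = 1 := by rw [mul_comm, h4]
  obtain ⟨x0000, hx0000⟩ : ∃ x, x = -P * (s1 * s2 * s3 * s4) := ⟨_, rfl⟩
  have kx0000 := key s1 s2 s3 s4 r1 r2 r3 r4 h1 h2 h3 h4 rfl rfl rfl rfl _ hx0000
  obtain ⟨x0001, hx0001⟩ : ∃ x, x = -P * (s1 * s2 * s3 * r4) := ⟨_, rfl⟩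
  have kx0001 := key s1 s2 s3 r4 r1 r2 r3 s4 h1 h2 h3 g4 rfl rfl rfl (add_comm _ _) _ hx0001
  obtain ⟨x0010, hx0010⟩ : ∃ x, x = -P * (s1 * s2 * r3 * s4) := ⟨_, rfl⟩
  have kx0010 := key s1 s2 r3 s4 r1 r2 s3 r4 h1 h2 g3 h4 rfl rfl (add_comm _ _) rfl _ hx0010
  obtain ⟨x0011, hx0011⟩ : ∃ x, x = -P * (s1 * s2 * r3 * r4) := ⟨_, rfl⟩
  have kx0011 := key s1 s2 r3 r4 r1 r2 s3 s4 h1 h2 g3 g4 rfl rfl (add_comm _ _) (add_comm _ _) _ hx0011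
  obtain ⟨x0100, hx0100⟩ : ∃ x, x = -P * (s1 * r2 * s3 * s4) := ⟨_, rfl⟩
  have kx0100 := key s1 r2 s3 s4 r1 s2 r3 r4 h1 g2 h3 h4 rfl (add_comm _ _) rfl rfl _ hx0100
  obtain ⟨x0101, hx0101⟩ : ∃ x, x = -P * (s1 * r2 * s3 * r4) := ⟨_, rfl⟩
  have kx0101 := key s1 r2 s3 r4 r1 s2 r3 s4 h1 g2 h3 g4 rfl (add_comm _ _) rfl (add_comm _ _) _ hx0101
  obtain ⟨x0110, hx0110⟩ : ∃ x, x = -P * (s1 * r2 * r3 * s4) := ⟨_, rfl⟩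
  have kx0110 := key s1 r2 r3 s4 r1 s2 s3 r4 h1 g2 g3 h4 rfl (add_comm _ _) (add_comm _ _) rfl _ hx0110
  obtain ⟨x0111, hx0111⟩ : ∃ x, x = -P * (s1 * r2 * r3 * r4) := ⟨_, rfl⟩
  have kx0111 := key s1 r2 r3 r4 r1 s2 s3 s4 h1 g2 g3 g4 rfl (add_comm _ _) (add_comm _ _) (add_comm _ _) _ hx0111
  obtain ⟨x1000, hx1000⟩ : ∃ x, x = -P * (r1 * s2 * s3 * s4) := ⟨_, rfl⟩
  have kx1000 := key r1 s2 s3 s4 s1 r2 r3 r4 g1 h2 h3 h4 (add_comm _ _) rfl rfl rfl _ hx1000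
  obtain ⟨x1001, hx1001⟩ : ∃ x, x = -P * (r1 * s2 * s3 * r4) := ⟨_, rfl⟩
  have kx1001 := key r1 s2 s3 r4 s1 r2 r3 s4 g1 h2 h3 g4 (add_comm _ _) rfl rfl (add_comm _ _) _ hx1001
  obtain ⟨x1010, hx1010⟩ : ∃ x, x = -P * (r1 * s2 * r3 * s4) := ⟨_, rfl⟩
  have kx1010 := key r1 s2 r3 s4 s1 r2 s3 r4 g1 h2 g3 h4 (add_comm _ _) rfl (add_comm _ _) rfl _ hx1010
  obtain ⟨x1011, hx1011⟩ : ∃ x, x = -P * (r1 * s2 * r3 * r4) := ⟨_, rfl⟩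
  have kx1011 := key r1 s2 r3 r4 s1 r2 s3 s4 g1 h2 g3 g4 (add_comm _ _) rfl (add_comm _ _) (add_comm _ _) _ hx1011
  obtain ⟨x1100, hx1100⟩ : ∃ x, x = -P * (r1 * r2 * s3 * s4) := ⟨_, rfl⟩
  have kx1100 := key r1 r2 s3 s4 s1 s2 r3 r4 g1 g2 h3 h4 (add_comm _ _) (add_comm _ _) rfl rfl _ hx1100
  obtain ⟨x1101, hx1101⟩ : ∃ x, x = -P * (r1 * r2 * s3 * r4) := ⟨_, rfl⟩
  have kx1101 := key r1 r2 s3 r4 s1 s2 r3 s4 g1 g2 h3 g4 (add_comm _ _) (add_comm _ _) rfl (add_comm _ _) _ hx1101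
  obtain ⟨x1110, hx1110⟩ : ∃ x, x = -P * (r1 * r2 * r3 * s4) := ⟨_, rfl⟩
  have kx1110 := key r1 r2 r3 s4 s1 s2 s3 r4 g1 g2 g3 h4 (add_comm _ _) (add_comm _ _) (add_comm _ _) rfl _ hx1110
  obtain ⟨x1111, hx1111⟩ : ∃ x, x = -P * (r1 * r2 * r3 * r4) := ⟨_, rfl⟩
  have kx1111 := key r1 r2 r3 r4 s1 s2 s3 s4 g1 g2 g3 g4 (add_comm _ _) (add_comm _ _) (add_comm _ _) (add_comm _ _) _ hx1111
  have hc2 : ∀ m, c m = -P * ((r1 ^ 7 * r2 ^ 7 * r3 ^ 7 * r4 ^ 7) * x0000 ^ m + -(r1 ^ 7 * r2 ^ 7 * r3 ^ 7 * s4 ^ 7) * x0001 ^ m + -(r1 ^ 7 * r2 ^ 7 * s3 ^ 7 * r4 ^ 7) * x0010 ^ m + (r1 ^ 7 * r2 ^ 7 * s3 ^ 7 * s4 ^ 7) * x0011 ^ m + -(r1 ^ 7 * s2 ^ 7 * r3 ^ 7 * r4 ^ 7) * x0100 ^ m + (r1 ^ 7 * s2 ^ 7 * r3 ^ 7 * s4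 ^ 7) * x0101 ^ m + (r1 ^ 7 * s2 ^ 7 * s3 ^ 7 * r4 ^ 7) * x0110 ^ m + -(r1 ^ 7 * s2 ^ 7 * s3 ^ 7 * s4 ^ 7) * x0111 ^ m + -(s1 ^ 7 * r2 ^ 7 * r3 ^ 7 * r4 ^ 7) * x1000 ^ m + (s1 ^ 7 * r2 ^ 7 * r3 ^ 7 * s4 ^ 7) * x1001 ^ m + (s1 ^ 7 * r2 ^ 7 * s3 ^ 7 * r4 ^ 7) * x1010 ^ m + -(s1 ^ 7 * r2 ^ 7 * s3 ^ 7 * s4 ^ 7) * x1011 ^ m + (s1 ^ 7 * s2 ^ 7 * r3 ^ 7 * r4 ^ 7) * x1100 ^ m + -(s1 ^ 7 * s2 ^ 7 * r3 ^ 7 * s4 ^ 7) * x1101 ^ m + -(s1 ^ 7 * s2 ^ 7 * s3 ^ 7 * r4 ^ 7) * x1110 ^ m + (s1 ^ 7 * s2 ^ 7 * s3 ^ 7 * s4 ^ 7) * x1111 ^ m) := by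
    intro m
    rw [hc, hx0000, hx0001, hx0010, hx0011, hx0100, hx0101, hx0110, hx0111, hx1000, hx1001, hx1010, hx1011, hx1100, hx1101, hx1110, hx1111]
    simp only [mul_pow]
    ring
  simp only [hc2]
  linear_combination -P * ((r1 ^ 7 * r2 ^ 7 * r3 ^ 7 * r4 ^ 7) * kx0000 + -(r1 ^ 7 * r2 ^ 7 * r3 ^ 7 * s4 ^ 7) * kx0001 + -(r1 ^ 7 * r2 ^ 7 * s3 ^ 7 * r4 ^ 7) * kx0010 + (r1 ^ 7 * r2 ^ 7 * s3 ^ 7 * s4 ^ 7) * kx0011 + -(r1 ^ 7 * s2 ^ 7 * r3 ^ 7 * r4 ^ 7) * kx0100 + (r1 ^ 7 * s2 ^ 7 * r3 ^ 7 * s4 ^ 7) * kx0101 + (r1 ^ 7 * s2 ^ 7 * s3 ^ 7 * r4 ^ 7) * kx0110 + -(r1 ^ 7 * s2 ^ 7 * s3 ^ 7 * s4 ^ 7) * kx0111 + -(s1 ^ 7 * r2 ^ 7 * r3 ^ 7 * r4 ^ 7) * kx1000 + (s1 ^ 7 * r2 ^ 7 * r3 ^ 7 * s4 ^ 7) * kx1001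 + (s1 ^ 7 * r2 ^ 7 * s3 ^ 7 * r4 ^ 7) * kx1010 + -(s1 ^ 7 * r2 ^ 7 * s3 ^ 7 * s4 ^ 7) * kx1011 + (s1 ^ 7 * s2 ^ 7 * r3 ^ 7 * r4 ^ 7) * kx1100 + -(s1 ^ 7 * s2 ^ 7 * r3 ^ 7 * s4 ^ 7) * kx1101 + -(s1 ^ 7 * s2 ^ 7 * s3 ^ 7 * r4 ^ 7) * kx1110 + (s1 ^ 7 * s2 ^ 7 * s3 ^ 7 * s4 ^ 7) * kx1111)

set_option linter.unusedVariables false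

lemma gp_rec_unique {K : Type*} [CommRing K] (f g : ℕ → K)
    (hf : ∀ n : ℕ,
      f (n + 16) - f (n + 15) - 2 * f (n + 13) - 16 * f (n + 12) + 10 * f (n + 11)
        - 2 * f (n + 10) + 16 * f (n + 9) + 50 * f (n + 8) - 16 * f (n + 7)
        - 2 * f (n + 6) - 10 * f (n + 5) - 16 * f (n + 4) + 2 * f (n + 3)
        + f (n + 1) + f n = 0)
    (hg : ∀ n : ℕ,
      g (n + 16) - g (n + 15) - 2 * g (n + 13) - 16 * g (n + 12) + 10 * g (n + 11)
        - 2 * g (n + 10) + 16 * g (n + 9) + 50 * g (n + 8) - 16 * g (n + 7)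
        - 2 * g (n + 6) - 10 * g (n + 5) - 16 * g (n + 4) + 2 * g (n + 3)
        + g (n + 1) + g n = 0)
    (h : ∀ m < 16, f m = g m) (m : ℕ) : f m = g m := by
  induction m using Nat.strong_induction_on with
  | _ m ih =>
    by_cases hm : m < 16
    · exact h m hm
    · obtain ⟨k, rfl⟩ : ∃ k, m = k + 16 := ⟨m - 16, by omega⟩
      have hr := hf k
      have hs := hg k
      rw [ih (k + 15) (by omega), ih (k + 13) (by omega), ih (k + 12) (by omega),
        ih (k + 11) (by omega), ih (k + 10) (by omega), ih (k + 9) (by omega),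
        ih (k + 8) (by omega), ih (k + 7) (by omega), ih (k + 6) (by omega),
        ih (k + 5) (by omega), ih (k + 4) (by omega), ih (k + 3) (by omega),
        ih (k + 1) (by omega), ih k (by omega)] at hr
      generalize f (k + 16) = x at *
      linear_combination hr - hs

lemma gp_final_alg {K : Type*} [CommRing K] (e A t1 t2 t3 t4 : K) (he : e * e = 1)
    (h : e * (-t1 * -t2 * -t3 * -t4) = -1 * -17 * A) :
    e * 17 * A = t1 * t2 * t3 * t4 := by
  linear_combination -e * h + t1 * t2 * t3 * t4 * he

lemma gp_d2 {K : Type*} [CommRing K] (s r w : K) (h : s * r = 1) (hw : w = s ^ 2 + r ^ 2) :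
    s ^ 2 - r ^ 2 = (s - r) * (s + r) := by
  ring

lemma gp_d3 {K : Type*} [CommRing K] (s r w : K) (h : s * r = 1) (hw : w = s ^ 2 + r ^ 2) :
    s ^ 3 - r ^ 3 = (s - r) * (w + 1) := by
  rw [hw]; linear_combination (s - r) * h

lemma gp_d4 {K : Type*} [CommRing K] (s r w : K) (h : s * r = 1) (hw : w = s ^ 2 + r ^ 2) :
    s ^ 4 - r ^ 4 = (s - r) * ((s + r) * w) := by
  rw [hw]; ring

lemma gp_d5 {K : Type*} [CommRing K] (s r w : K) (h : s * r = 1) (hw : w = s ^ 2 + r ^ 2) :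
    s ^ 5 - r ^ 5 = (s - r) * (w ^ 2 + w - 1) := by
  rw [hw]
  linear_combination (s - r) * (s ^ 2 + r ^ 2 - s * r - 1) * h

lemma gp_d6 {K : Type*} [CommRing K] (s r w : K) (h : s * r = 1) (hw : w = s ^ 2 + r ^ 2) :
    s ^ 6 - r ^ 6 = (s - r) * ((s + r) * ((w + 1) * (w + -1))) := by
  rw [hw]
  linear_combination -(s - r) * (s + r) * (s * r + 1) * h

lemma gp_d7 {K : Type*} [CommRing K] (s r w : K) (h : s * r = 1) (hw : w = s ^ 2 + r ^ 2) :
    s ^ 7 - r ^ 7 = (s - r) * (w ^ 3 + w ^ 2 - 2 * w - 1) := by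
  rw [hw]
  have e : s ^ 7 - r ^ 7 = (s - r) * (s ^ 6 + s ^ 5 * r + s ^ 4 * r ^ 2 + s ^ 3 * r ^ 3
      + s ^ 2 * r ^ 4 + s * r ^ 5 + r ^ 6) := by ring
  have h2 : s ^ 2 * r ^ 2 = 1 := by rw [← mul_pow, h, one_pow]
  have h3 : s ^ 3 * r ^ 3 = 1 := by rw [← mul_pow, h, one_pow]
  rw [e]
  linear_combination (s - r) * ((s ^ 4 + r ^ 4) * h + (-2 * s ^ 2 - 2 * r ^ 2 - 2) * h2 + h3)

lemma gp_d8 {K : Type*} [CommRing K] (s r w : K) (h : s * r = 1) (hw : w = s ^ 2 + r ^ 2) :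
    s ^ 8 - r ^ 8 = (s - r) * ((s + r) * (w * (w ^ 2 - 2))) := by
  rw [hw]
  have h2 : s ^ 2 * r ^ 2 = 1 := by rw [← mul_pow, h, one_pow]
  linear_combination -(s - r) * (s + r) * (s ^ 2 + r ^ 2) * 2 * h2

lemma gp_g2 {K : Type*} [CommRing K] (s1 s2 s3 s4 r1 r2 r3 r4 : K)
    (h1 : s1 * r1 = 1) (h2 : s2 * r2 = 1) (h3 : s3 * r3 = 1) (h4 : s4 * r4 = 1)
    (w1 w2 w3 w4 : K) (hw1 : w1 = s1 ^ 2 + r1 ^ 2) (hw2 : w2 = s2 ^ 2 + r2 ^ 2)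
    (hw3 : w3 = s3 ^ 2 + r3 ^ 2) (hw4 : w4 = s4 ^ 2 + r4 ^ 2)
    (P D : K) (hP : P = (s1 + r1) * (s2 + r2) * (s3 + r3) * (s4 + r4))
    (hD : D = (s1 - r1) * (s2 - r2) * (s3 - r3) * (s4 - r4)) :
    (s1 ^ 2 - r1 ^ 2) * (s2 ^ 2 - r2 ^ 2) * (s3 ^ 2 - r3 ^ 2) * (s4 ^ 2 - r4 ^ 2) = D * P := by
  rw [gp_d2 s1 r1 w1 h1 hw1, gp_d2 s2 r2 w2 h2 hw2, gp_d2 s3 r3 w3 h3 hw3, gp_d2 s4 r4 w4 h4 hw4, hD, hP]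
  ring

lemma gp_g3 {K : Type*} [CommRing K] (s1 s2 s3 s4 r1 r2 r3 r4 : K)
    (h1 : s1 * r1 = 1) (h2 : s2 * r2 = 1) (h3 : s3 * r3 = 1) (h4 : s4 * r4 = 1)
    (w1 w2 w3 w4 : K) (hw1 : w1 = s1 ^ 2 + r1 ^ 2) (hw2 : w2 = s2 ^ 2 + r2 ^ 2)
    (hw3 : w3 = s3 ^ 2 + r3 ^ 2) (hw4 : w4 = s4 ^ 2 + r4 ^ 2)
    (P D : K) (hP : P = (s1 + r1) * (s2 + r2) * (s3 + r3) * (s4 + r4))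
    (hD : D = (s1 - r1) * (s2 - r2) * (s3 - r3) * (s4 - r4))
    (v : K) (hv : (w1 + 1) * (w2 + 1) * (w3 + 1) * (w4 + 1) = v) :
    (s1 ^ 3 - r1 ^ 3) * (s2 ^ 3 - r2 ^ 3) * (s3 ^ 3 - r3 ^ 3) * (s4 ^ 3 - r4 ^ 3) = D * v := by
  rw [gp_d3 s1 r1 w1 h1 hw1, gp_d3 s2 r2 w2 h2 hw2, gp_d3 s3 r3 w3 h3 hw3, gp_d3 s4 r4 w4 h4 hw4, hD, ← hv]
  ring

lemma gp_g4 {K : Type*} [CommRing K] (s1 s2 s3 s4 r1 r2 r3 r4 : K)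
    (h1 : s1 * r1 = 1) (h2 : s2 * r2 = 1) (h3 : s3 * r3 = 1) (h4 : s4 * r4 = 1)
    (w1 w2 w3 w4 : K) (hw1 : w1 = s1 ^ 2 + r1 ^ 2) (hw2 : w2 = s2 ^ 2 + r2 ^ 2)
    (hw3 : w3 = s3 ^ 2 + r3 ^ 2) (hw4 : w4 = s4 ^ 2 + r4 ^ 2)
    (P D : K) (hP : P = (s1 + r1) * (s2 + r2) * (s3 + r3) * (s4 + r4))
    (hD : D = (s1 - r1) * (s2 - r2) * (s3 - r3) * (s4 - r4))
    (v : K) (hv : w1 * w2 * w3 * w4 = v) :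
    (s1 ^ 4 - r1 ^ 4) * (s2 ^ 4 - r2 ^ 4) * (s3 ^ 4 - r3 ^ 4) * (s4 ^ 4 - r4 ^ 4) = D * P * v := by
  rw [gp_d4 s1 r1 w1 h1 hw1, gp_d4 s2 r2 w2 h2 hw2, gp_d4 s3 r3 w3 h3 hw3, gp_d4 s4 r4 w4 h4 hw4, hD, hP, ← hv]
  ring

lemma gp_g5 {K : Type*} [CommRing K] (s1 s2 s3 s4 r1 r2 r3 r4 : K)
    (h1 : s1 * r1 = 1) (h2 : s2 * r2 = 1) (h3 : s3 * r3 = 1) (h4 : s4 * r4 = 1)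
    (w1 w2 w3 w4 : K) (hw1 : w1 = s1 ^ 2 + r1 ^ 2) (hw2 : w2 = s2 ^ 2 + r2 ^ 2)
    (hw3 : w3 = s3 ^ 2 + r3 ^ 2) (hw4 : w4 = s4 ^ 2 + r4 ^ 2)
    (P D : K) (hP : P = (s1 + r1) * (s2 + r2) * (s3 + r3) * (s4 + r4))
    (hD : D = (s1 - r1) * (s2 - r2) * (s3 - r3) * (s4 - r4))
    (v : K) (hv : (w1 ^ 2 + w1 - 1) * (w2 ^ 2 + w2 - 1) * (w3 ^ 2 + w3 - 1) * (w4 ^ 2 + w4 - 1) = v) :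
    (s1 ^ 5 - r1 ^ 5) * (s2 ^ 5 - r2 ^ 5) * (s3 ^ 5 - r3 ^ 5) * (s4 ^ 5 - r4 ^ 5) = D * v := by
  rw [gp_d5 s1 r1 w1 h1 hw1, gp_d5 s2 r2 w2 h2 hw2, gp_d5 s3 r3 w3 h3 hw3, gp_d5 s4 r4 w4 h4 hw4, hD, ← hv]
  ring

lemma gp_g6 {K : Type*} [CommRing K] (s1 s2 s3 s4 r1 r2 r3 r4 : K)
    (h1 : s1 * r1 = 1) (h2 : s2 * r2 = 1) (h3 : s3 * r3 = 1) (h4 : s4 * r4 = 1)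
    (w1 w2 w3 w4 : K) (hw1 : w1 = s1 ^ 2 + r1 ^ 2) (hw2 : w2 = s2 ^ 2 + r2 ^ 2)
    (hw3 : w3 = s3 ^ 2 + r3 ^ 2) (hw4 : w4 = s4 ^ 2 + r4 ^ 2)
    (P D : K) (hP : P = (s1 + r1) * (s2 + r2) * (s3 + r3) * (s4 + r4))
    (hD : D = (s1 - r1) * (s2 - r2) * (s3 - r3) * (s4 - r4))
    (v : K) (hv : ((w1 + 1) * (w2 + 1) * (w3 + 1) * (w4 + 1)) *
      ((w1 + -1) * (w2 + -1) * (w3 + -1) * (w4 + -1)) = v) :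
    (s1 ^ 6 - r1 ^ 6) * (s2 ^ 6 - r2 ^ 6) * (s3 ^ 6 - r3 ^ 6) * (s4 ^ 6 - r4 ^ 6) = D * P * v := by
  rw [gp_d6 s1 r1 w1 h1 hw1, gp_d6 s2 r2 w2 h2 hw2, gp_d6 s3 r3 w3 h3 hw3, gp_d6 s4 r4 w4 h4 hw4, hD, hP, ← hv]
  ring

lemma gp_g7 {K : Type*} [CommRing K] (s1 s2 s3 s4 r1 r2 r3 r4 : K)
    (h1 : s1 * r1 = 1) (h2 : s2 * r2 = 1) (h3 : s3 * r3 = 1) (h4 : s4 * r4 = 1)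
    (w1 w2 w3 w4 : K) (hw1 : w1 = s1 ^ 2 + r1 ^ 2) (hw2 : w2 = s2 ^ 2 + r2 ^ 2)
    (hw3 : w3 = s3 ^ 2 + r3 ^ 2) (hw4 : w4 = s4 ^ 2 + r4 ^ 2)
    (P D : K) (hP : P = (s1 + r1) * (s2 + r2) * (s3 + r3) * (s4 + r4))
    (hD : D = (s1 - r1) * (s2 - r2) * (s3 - r3) * (s4 - r4))
    (v : K) (hv : (w1 ^ 3 + w1 ^ 2 - 2 * w1 - 1) * (w2 ^ 3 + w2 ^ 2 - 2 * w2 - 1) *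
      (w3 ^ 3 + w3 ^ 2 - 2 * w3 - 1) * (w4 ^ 3 + w4 ^ 2 - 2 * w4 - 1) = v) :
    (s1 ^ 7 - r1 ^ 7) * (s2 ^ 7 - r2 ^ 7) * (s3 ^ 7 - r3 ^ 7) * (s4 ^ 7 - r4 ^ 7) = D * v := by
  rw [gp_d7 s1 r1 w1 h1 hw1, gp_d7 s2 r2 w2 h2 hw2, gp_d7 s3 r3 w3 h3 hw3, gp_d7 s4 r4 w4 h4 hw4, hD, ← hv]
  ring

lemma gp_g8 {K : Type*} [CommRing K] (s1 s2 s3 s4 r1 r2 r3 r4 : K)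
    (h1 : s1 * r1 = 1) (h2 : s2 * r2 = 1) (h3 : s3 * r3 = 1) (h4 : s4 * r4 = 1)
    (w1 w2 w3 w4 : K) (hw1 : w1 = s1 ^ 2 + r1 ^ 2) (hw2 : w2 = s2 ^ 2 + r2 ^ 2)
    (hw3 : w3 = s3 ^ 2 + r3 ^ 2) (hw4 : w4 = s4 ^ 2 + r4 ^ 2)
    (P D : K) (hP : P = (s1 + r1) * (s2 + r2) * (s3 + r3) * (s4 + r4))
    (hD : D = (s1 - r1) * (s2 - r2) * (s3 - r3) * (s4 - r4))
    (v : K) (hv : (w1 * w2 * w3 * w4) * ((w1 ^ 2 - 2) * (w2 ^ 2 - 2) * (w3 ^ 2 - 2) * (w4 ^ 2 - 2)) = v) :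
    (s1 ^ 8 - r1 ^ 8) * (s2 ^ 8 - r2 ^ 8) * (s3 ^ 8 - r3 ^ 8) * (s4 ^ 8 - r4 ^ 8) = D * P * v := by
  rw [gp_d8 s1 r1 w1 h1 hw1, gp_d8 s2 r2 w2 h2 hw2, gp_d8 s3 r3 w3 h3 hw3, gp_d8 s4 r4 w4 h4 hw4, hD, hP, ← hv]
  ring

set_option maxHeartbeats 1000000 in
lemma gp_closed {K : Type*} [Field K] (s1 s2 s3 s4 r1 r2 r3 r4 : K)
    (h1 : s1 * r1 = 1) (h2 : s2 * r2 = 1) (h3 : s3 * r3 = 1) (h4 : s4 * r4 = 1)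
    (w1 w2 w3 w4 : K) (hw1 : w1 = s1 ^ 2 + r1 ^ 2) (hw2 : w2 = s2 ^ 2 + r2 ^ 2)
    (hw3 : w3 = s3 ^ 2 + r3 ^ 2) (hw4 : w4 = s4 ^ 2 + r4 ^ 2)
    (e1 : w1 + w2 + w3 + w4 = 1)
    (e2 : w1 * w2 + w1 * w3 + w1 * w4 + w2 * w3 + w2 * w4 + w3 * w4 = -6)
    (e3 : w1 * w2 * w3 + w1 * w2 * w4 + w1 * w3 * w4 + w2 * w3 * w4 = 0)
    (e4 : w1 * w2 * w3 * w4 = -1)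
    (a : ℕ → ℤ)
    (h0 : a 0 = -83) (a1 : a 1 = 35) (a2 : a 2 = -19) (a3 : a 3 = 1)
    (a4 : a 4 = -5) (a5 : a 5 = 1) (a6 : a 6 = -1) (h7 : a 7 = 0)
    (h8 : a 8 = 1) (h9 : a 9 = 1) (h10 : a 10 = 5) (h11 : a 11 = 1)
    (h12 : a 12 = 19) (h13 : a 13 = 35) (h14 : a 14 = 83) (h15 : a 15 = 73)
    (hrec : ∀ n : ℕ,
      a (n + 16) - a (n + 15) - 2 * a (n + 13) - 16 * a (n + 12) + 10 * a (n + 11)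
        - 2 * a (n + 10) + 16 * a (n + 9) + 50 * a (n + 8) - 16 * a (n + 7)
        - 2 * a (n + 6) - 10 * a (n + 5) - 16 * a (n + 4) + 2 * a (n + 3)
        + a (n + 1) + a n = 0) (n : ℕ) :
    (-1) ^ n * 17 * (a (n + 7) : K) ^ 2 =
      (2 - (s1 ^ 2) ^ n - (r1 ^ 2) ^ n) * (2 - (s2 ^ 2) ^ n - (r2 ^ 2) ^ n) *
      (2 - (s3 ^ 2) ^ n - (r3 ^ 2) ^ n) * (2 - (s4 ^ 2) ^ n - (r4 ^ 2) ^ n) := by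
  have y1 : (s1 + r1) ^ 2 = w1 + 2 := by rw [hw1]; linear_combination 2 * h1
  have y2 : (s2 + r2) ^ 2 = w2 + 2 := by rw [hw2]; linear_combination 2 * h2
  have y3 : (s3 + r3) ^ 2 = w3 + 2 := by rw [hw3]; linear_combination 2 * h3
  have y4 : (s4 + r4) ^ 2 = w4 + 2 := by rw [hw4]; linear_combination 2 * h4
  have z1 : (s1 - r1) ^ 2 = w1 - 2 := by rw [hw1]; linear_combination -2 * h1
  have z2 : (s2 - r2) ^ 2 = w2 - 2 := by rw [hw2]; linear_combination -2 * h2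
  have z3 : (s3 - r3) ^ 2 = w3 - 2 := by rw [hw3]; linear_combination -2 * h3
  have z4 : (s4 - r4) ^ 2 = w4 - 2 := by rw [hw4]; linear_combination -2 * h4
  have hlin := fun c => gp_prod_lin w1 w2 w3 w4 c e1 e2 e3 e4
  obtain ⟨q5, q8, q7⟩ := gp_prod_quad w1 w2 w3 w4 e1 e2 e3 e4
  obtain ⟨P, hP⟩ : ∃ P, P = (s1 + r1) * (s2 + r2) * (s3 + r3) * (s4 + r4) := ⟨_, rfl⟩
  have hP2 : P ^ 2 = -1 := by
    rw [hP, mul_pow, mul_pow, mul_pow, y1, y2, y3, y4, hlin]; norm_num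
  obtain ⟨D, hD⟩ : ∃ D, D = (s1 - r1) * (s2 - r2) * (s3 - r3) * (s4 - r4) := ⟨_, rfl⟩
  have hD2 : D ^ 2 = -17 := by
    rw [hD, mul_pow, mul_pow, mul_pow, z1, z2, z3, z4]
    have := hlin (-2)
    simp only [← sub_eq_add_neg] at this
    rw [this]; norm_num
  obtain ⟨c, hc⟩ : ∃ c : ℕ → K, ∀ m, c m = (-P) ^ (m + 1) * ((s1 ^ m * r1 ^ 7 - r1 ^ m * s1 ^ 7) *
      (s2 ^ m * r2 ^ 7 - r2 ^ m * s2 ^ 7) * (s3 ^ m * r3 ^ 7 - r3 ^ m * s3 ^ 7) *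
      (s4 ^ m * r4 ^ 7 - r4 ^ m * s4 ^ 7)) := ⟨_, fun m => rfl⟩
  have hcrec := gp_seq s1 s2 s3 s4 r1 r2 r3 r4 h1 h2 h3 h4 P
    (by rw [y1, y2, y3, y4]; linear_combination e1)
    (by rw [y1, y2, y3, y4]; linear_combination e2 + 6 * e1)
    (by rw [y1, y2, y3, y4]; linear_combination e3 + 4 * e2 + 12 * e1) hP hP2 c hc
  -- powers of `P`
  have p2 : P ^ 2 = -1 := hP2
  have pk : ∀ k l : ℕ, (-P) ^ (2 * k) = (-1) ^ k ∧ (-P) ^ (2 * l + 1) = -P * (-1) ^ l := by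
    intro k l
    constructor
    · rw [pow_mul, neg_sq, hP2]
    · rw [pow_succ, pow_mul, neg_sq, hP2]; ring
  -- the two-variable factors
  have cancel : ∀ s r : K, s * r = 1 → ∀ m k : ℕ, m = k + 7 →
      s ^ m * r ^ 7 - r ^ m * s ^ 7 = s ^ k - r ^ k := by
    intro s r h m k hm
    have h7 : s ^ 7 * r ^ 7 = 1 := by rw [← mul_pow, h, one_pow]
    rw [hm, pow_add, pow_add]
    linear_combination (s ^ k - r ^ k) * h7
  have cancel' : ∀ s r : K, s * r = 1 → ∀ m k : ℕ, m + k = 7 →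
      s ^ m * r ^ 7 - r ^ m * s ^ 7 = -(s ^ k - r ^ k) := by
    intro s r h m k hm
    have h7 : s ^ m * r ^ m = 1 := by rw [← mul_pow, h, one_pow]
    rw [← hm, pow_add, pow_add]
    linear_combination (r ^ k - s ^ k) * h7
  have f0 : c 7 = 0 := by rw [hc]; ring
  have pos : ∀ k, c (k + 7) = (-P) ^ k * ((s1 ^ k - r1 ^ k) * (s2 ^ k - r2 ^ k) *
      (s3 ^ k - r3 ^ k) * (s4 ^ k - r4 ^ k)) := by
    intro k
    rw [hc, cancel s1 r1 h1 _ k rfl, cancel s2 r2 h2 _ k rfl, cancel s3 r3 h3 _ k rfl,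
      cancel s4 r4 h4 _ k rfl, show k + 7 + 1 = k + 2 * 4 by ring, pow_add, (pk 4 0).1]
    norm_num
  have neg : ∀ m k, m + k = 7 → c m = (-1) ^ k * c (k + 7) := by
    intro m k hm
    rw [pos, hc, cancel' s1 r1 h1 m k hm, cancel' s2 r2 h2 m k hm, cancel' s3 r3 h3 m k hm,
      cancel' s4 r4 h4 m k hm]
    have : (-P) ^ (m + 1) = (-1) ^ k * (-P) ^ k := by
      have h8 : (-P) ^ (m + 1) * (-P) ^ k = 1 := by
        rw [← pow_add, show m + 1 + k = 2 * 4 by omega, (pk 4 0).1]; norm_num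
      have hk : (-1 : K) ^ k * (-P) ^ k * (-P) ^ k = 1 := by
        rw [← mul_pow, ← mul_pow, show (-1 * -P * -P : K) = 1 by linear_combination -hP2, one_pow]
      have hne : (-P) ^ k ≠ 0 := right_ne_zero_of_mul_eq_one h8
      exact mul_right_cancel₀ hne (h8.trans hk.symm)
    rw [this]; ring
  have c8 : c 8 = -P * D * 1 := by
    rw [hD]; exact (pos 1).trans (by simp only [pow_one, mul_one])
  have l6 : ((w1 + 1) * (w2 + 1) * (w3 + 1) * (w4 + 1)) *
      ((w1 + -1) * (w2 + -1) * (w3 + -1) * (w4 + -1)) = 35 := by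
    rw [hlin 1, hlin (-1)]; norm_num
  have l8 : (w1 * w2 * w3 * w4) * ((w1 ^ 2 - 2) * (w2 ^ 2 - 2) * (w3 ^ 2 - 2) * (w4 ^ 2 - 2))
      = -73 := by rw [e4, q8]; norm_num
  have c9 : c 9 = -P * D * 1 := by
    refine (pos 2).trans ?_
    rw [gp_g2 s1 s2 s3 s4 r1 r2 r3 r4 h1 h2 h3 h4 w1 w2 w3 w4 hw1 hw2 hw3 hw4 P D hP hD]
    have := (pk 1 0).1
    norm_num at this ⊢
    rw [this]
    ring
  have c10 : c 10 = -P * D * 5 := by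
    refine (pos 3).trans ?_
    rw [gp_g3 s1 s2 s3 s4 r1 r2 r3 r4 h1 h2 h3 h4 w1 w2 w3 w4 hw1 hw2 hw3 hw4 P D hP hD _ (hlin 1)]
    have := (pk 1 1).2
    norm_num at this ⊢
    rw [this]
    ring
  have c11 : c 11 = -P * D * 1 := by
    refine (pos 4).trans ?_
    rw [gp_g4 s1 s2 s3 s4 r1 r2 r3 r4 h1 h2 h3 h4 w1 w2 w3 w4 hw1 hw2 hw3 hw4 P D hP hD _ e4]
    have := (pk 2 0).1
    norm_num at this ⊢
    rw [this]
    ring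
  have c12 : c 12 = -P * D * 19 := by
    refine (pos 5).trans ?_
    rw [gp_g5 s1 s2 s3 s4 r1 r2 r3 r4 h1 h2 h3 h4 w1 w2 w3 w4 hw1 hw2 hw3 hw4 P D hP hD _ q5]
    have := (pk 2 2).2
    norm_num at this ⊢
    rw [this]
    ring
  have c13 : c 13 = -P * D * 35 := by
    refine (pos 6).trans ?_
    rw [gp_g6 s1 s2 s3 s4 r1 r2 r3 r4 h1 h2 h3 h4 w1 w2 w3 w4 hw1 hw2 hw3 hw4 P D hP hD _ l6]
    have := (pk 3 0).1
    norm_num at this ⊢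
    rw [this]
    ring
  have c14 : c 14 = -P * D * 83 := by
    refine (pos 7).trans ?_
    rw [gp_g7 s1 s2 s3 s4 r1 r2 r3 r4 h1 h2 h3 h4 w1 w2 w3 w4 hw1 hw2 hw3 hw4 P D hP hD _ q7]
    have := (pk 3 3).2
    norm_num at this ⊢
    rw [this]
    ring
  have c15 : c 15 = -P * D * 73 := by
    refine (pos 8).trans ?_
    rw [gp_g8 s1 s2 s3 s4 r1 r2 r3 r4 h1 h2 h3 h4 w1 w2 w3 w4 hw1 hw2 hw3 hw4 P D hP hD _ l8]
    have := (pk 4 0).1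
    norm_num at this ⊢
    rw [this]
    ring
  have main : ∀ m, c m = -P * D * (a m : K) := by
    refine gp_rec_unique c _ hcrec ?_ ?_
    · intro k
      have hr := congrArg (fun z : ℤ => -P * D * (z : K)) (hrec k)
      simp only [Int.cast_add, Int.cast_sub, Int.cast_mul, Int.cast_ofNat, Int.cast_zero,
        mul_zero] at hr
      rw [← hr]
      simp only [mul_add, mul_sub, mul_left_comm (-P * D)]
    · intro m hm
      interval_cases m
      · rw [neg 0 7 rfl, c14, h0]; push_cast; ring
      · rw [neg 1 6 rfl, c13, a1]; push_cast; ring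
      · rw [neg 2 5 rfl, c12, a2]; push_cast; ring
      · rw [neg 3 4 rfl, c11, a3]; push_cast; ring
      · rw [neg 4 3 rfl, c10, a4]; push_cast; ring
      · rw [neg 5 2 rfl, c9, a5]; push_cast; ring
      · rw [neg 6 1 rfl, c8, a6]; push_cast; ring
      · rw [f0, h7]; push_cast; ring
      · rw [c8, h8]; push_cast; ring
      · rw [c9, h9]; push_cast; ring
      · rw [c10, h10]; push_cast; ring
      · rw [c11, h11]; push_cast; ring
      · rw [c12, h12]; push_cast; ring
      · rw [c13, h13]; push_cast; ring
      · rw [c14, h14]; push_cast; ring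
      · rw [c15, h15]; push_cast; ring
  have hm := main (n + 7)
  rw [pos n] at hm
  have hsq := congrArg (fun t => t ^ 2) hm
  simp only [mul_pow] at hsq
  have sq : ∀ s r : K, s * r = 1 → (s ^ n - r ^ n) ^ 2 = -(2 - (s ^ 2) ^ n - (r ^ 2) ^ n) := by
    intro s r h
    have : s ^ n * r ^ n = 1 := by rw [← mul_pow, h, one_pow]
    rw [← pow_mul, ← pow_mul, mul_comm 2 n, pow_mul, pow_mul]
    linear_combination -2 * this
  rw [sq _ _ h1, sq _ _ h2, sq _ _ h3, sq _ _ h4, ← pow_mul, mul_comm n 2, (pk n 0).1, neg_sq, hP2,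
    hD2] at hsq
  have hn : ((-1 : K) ^ n) * (-1) ^ n = 1 := by rw [← mul_pow]; norm_num
  exact gp_final_alg _ _ _ _ _ _ hn hsq

/-- Every vertex is sent to the root `r` by iterating `f`. -/
def MTGood {V : Type*} (r : V) (f : V → V) : Prop := ∀ i, ∃ k, f^[k] i = r

/-- Matrix with rows `e_i - e_{f i}` for `i ≠ r`, and `e_r` at `r`. -/
def mtMat {V : Type*} [DecidableEq V] (R : Type*) [CommRing R] (r : V) (f : V → V) :
    Matrix V V R :=
  fun i => if i = r then Pi.single r 1 else Pi.single i 1 - Pi.single (f i) 1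

lemma mtMat_det_good {V : Type*} [DecidableEq V] [Fintype V] (R : Type*) [CommRing R] (r : V)
    (f : V → V) (hf : MTGood r f) : (mtMat R r f).det = 1 := by
  classical
  let d : V → ℕ := fun i => Nat.find (hf i)
  have hd : ∀ i, i ≠ r → d (f i) < d i := by
    intro i hi
    have h1 : f^[d i] i = r := Nat.find_spec (hf i)
    have h0 : d i ≠ 0 := by
      intro h; rw [h] at h1; exact hi h1
    obtain ⟨k, hk⟩ := Nat.exists_eq_succ_of_ne_zero h0
    have : d (f i) ≤ k := by
      apply Nat.find_min'
      rw [hk, Function.iterate_succ_apply] at h1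
      exact h1
    omega
  have hbt : (mtMat R r f).BlockTriangular (fun i => OrderDual.toDual (d i)) := by
    intro i j hij
    have hij' : d i < d j := hij
    unfold mtMat
    split_ifs with h
    · subst h
      rw [Pi.single_apply, if_neg]
      rintro rfl; omega
    · have := hd i h
      rw [Pi.sub_apply, Pi.single_apply, Pi.single_apply, if_neg, if_neg, sub_zero]
      · rintro rfl; omega
      · rintro rfl; omega
  rw [hbt.det]
  apply Finset.prod_eq_one
  intro a _
  have : (mtMat R r f).toSquareBlock (fun i => OrderDual.toDual (d i)) a = 1 := by
    ext ⟨i, hi⟩ ⟨j, hj⟩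
    rw [Matrix.toSquareBlock_def, Matrix.of_apply]
    simp only [Matrix.one_apply, Subtype.mk.injEq]
    have hij : d i = d j := OrderDual.toDual.injective (hi.trans hj.symm)
    unfold mtMat
    split_ifs with h h' h'
    · subst h; subst h'; simp
    · subst h; rw [Pi.single_apply, if_neg (Ne.symm h')]
    · subst h'
      have := hd i h
      rw [Pi.sub_apply, Pi.single_apply, Pi.single_apply, if_pos rfl, if_neg, sub_zero]
      intro e; rw [← e] at this; omega
    · have := hd i h
      rw [Pi.sub_apply, Pi.single_apply, Pi.single_apply, if_neg (Ne.symm h'), if_neg, sub_zero]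
      intro e; rw [← e] at this; omega
  rw [this, Matrix.det_one]

lemma mtMat_det_bad {V : Type*} [DecidableEq V] [Fintype V] (R : Type*) [CommRing R] [IsDomain R]
    (r : V) (f : V → V) (hf : ¬ MTGood r f) : (mtMat R r f).det = 0 := by
  classical
  rw [← Matrix.exists_mulVec_eq_zero_iff]
  unfold MTGood at hf
  push Not at hf
  obtain ⟨i, hi⟩ := hf
  refine ⟨fun j => if ∀ k, f^[k] j ≠ r then 1 else 0, ?_, ?_⟩
  · intro h
    have := congrFun h i
    simp only [Pi.zero_apply] at this
    rw [if_pos hi] at this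
    exact one_ne_zero this
  · funext j
    rw [Matrix.mulVec, Pi.zero_apply]
    unfold mtMat
    split_ifs with h
    · subst h
      rw [single_dotProduct, if_neg, mul_zero]
      intro h; exact h 0 rfl
    · rw [sub_dotProduct, single_dotProduct, single_dotProduct, one_mul, one_mul]
      have : (∀ k, f^[k] j ≠ r) ↔ (∀ k, f^[k] (f j) ≠ r) := by
        constructor
        · intro h k
          rw [← Function.iterate_succ_apply]; exact h _
        · intro h' k
          cases k with
          | zero => exact h
          | succ k => rw [Function.iterate_succ_apply]; exact h' k
      simp only [this, sub_self]

/-- The admissible out-neighbours. -/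
def mtNbr {V : Type*} [Fintype V] [DecidableEq V] (G : SimpleGraph V) [DecidableRel G.Adj]
    (r i : V) : Finset V := if i = r then {r} else G.neighborFinset i

lemma mt_det_expand {V : Type*} [Fintype V] [DecidableEq V] (G : SimpleGraph V)
    [DecidableRel G.Adj] (R : Type*) [CommRing R] (r : V) :
    ((G.lapMatrix R).updateRow r (Pi.single r 1)).det =
      ∑ f ∈ Fintype.piFinset (mtNbr G r), (mtMat R r f).det := by
  have := (Matrix.detRowAlternating (n := V) (R := R)).toMultilinearMap.map_sum_finset
    (fun i j => if i = r then Pi.single r (1 : R) else Pi.single i 1 - Pi.single j 1) (mtNbr G r)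
  refine Eq.trans ?_ this
  change _ = Matrix.det _
  congr 1
  ext i j
  by_cases h : i = r
  · subst h
    rw [Matrix.updateRow_self]
    simp [mtNbr]
  · rw [Matrix.updateRow_ne h]
    simp only [mtNbr, if_neg h, Finset.sum_sub_distrib, Finset.sum_const, Pi.sub_apply,
      SimpleGraph.card_neighborFinset_eq_degree, SimpleGraph.lapMatrix, SimpleGraph.degMatrix,
      Matrix.sub_apply, Matrix.diagonal_apply, SimpleGraph.adjMatrix_apply, Finset.sum_apply,
      Pi.smul_apply, Pi.single_apply]
    congr 1
    · by_cases hij : i = j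
      · simp [hij]
      · simp [hij, Ne.symm hij]
    · simp

/-- The graph with edges `{i, f i}` for `i ≠ r`. -/
def mtGraph {V : Type*} (r : V) (f : V → V) : SimpleGraph V :=
  SimpleGraph.fromRel (fun i j => i ≠ r ∧ j = f i)

lemma mtGraph_isTree {V : Type*} [Fintype V] (r : V) (f : V → V) (hf : MTGood r f) :
    (mtGraph r f).IsTree := by
  classical
  have hreach : ∀ k i, f^[k] i = r → (mtGraph r f).Reachable i r := by
    intro k
    induction k with
    | zero => intro i h; rw [Function.iterate_zero_apply] at h; rw [h]
    | succ k ih =>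
      intro i h
      by_cases hi : i = r
      · rw [hi]
      · rw [Function.iterate_succ_apply] at h
        have h2 := ih _ h
        by_cases hfi : i = f i
        · rw [← hfi] at h2; exact h2
        · exact (SimpleGraph.Adj.reachable
            (by rw [mtGraph, SimpleGraph.fromRel_adj]; exact ⟨hfi, Or.inl ⟨hi, rfl⟩⟩)).trans h2
  have hconn : (mtGraph r f).Connected := by
    rw [SimpleGraph.connected_iff_exists_forall_reachable]
    refine ⟨r, fun w => ?_⟩
    obtain ⟨k, hk⟩ := hf w
    exact (hreach k w hk).symm
  rw [SimpleGraph.isTree_iff_connected_and_card]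
  refine ⟨hconn, le_antisymm ?_ hconn.card_vert_le_card_edgeSet_add_one⟩
  have hsub : (mtGraph r f).edgeSet ⊆ ((Finset.univ.erase r).image (fun i => s(i, f i)) : Finset _) := by
    intro e
    induction e using Sym2.ind with
    | _ a b =>
      intro h
      rw [SimpleGraph.mem_edgeSet, mtGraph, SimpleGraph.fromRel_adj] at h
      simp only [Finset.coe_image, Set.mem_image, Finset.coe_erase, Finset.coe_univ]
      rcases h.2 with ⟨h1, h2⟩ | ⟨h1, h2⟩
      · exact ⟨a, by simpa using h1, by rw [h2]⟩
      · exact ⟨b, by simpa using h1, by rw [h2, Sym2.eq_swap]⟩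
  have h1 := Nat.card_mono (Finset.finite_toSet _) hsub
  have h2 : Nat.card (((Finset.univ.erase r).image (fun i => s(i, f i)) : Finset (Sym2 V)) : Set (Sym2 V))
      ≤ Fintype.card V - 1 := by
    simp only [Nat.card_eq_fintype_card, Fintype.card_coe, Finset.coe_sort_coe]
    refine Finset.card_image_le.trans ?_
    rw [Finset.card_erase_of_mem (Finset.mem_univ _), Finset.card_univ]
  have h3 : 0 < Fintype.card V := Fintype.card_pos_iff.mpr ⟨r⟩
  rw [Nat.card_eq_fintype_card (α := V)]
  omega

lemma mtGraph_inj {V : Type*} (r : V) (f g : V → V) (hf : MTGood r f)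
    (hfr : f r = r) (hgr : g r = r) (hfne : ∀ i, i ≠ r → f i ≠ i)
    (h : mtGraph r f = mtGraph r g) : f = g := by
  funext i
  by_contra hi
  have hne : ∀ i, f i ≠ g i → i ≠ r := by
    intro i h' hir
    rw [hir] at h'
    exact h' (hfr.trans hgr.symm)
  have step : ∀ i, f i ≠ g i → f (f i) ≠ g (f i) := by
    intro i hi
    have hir := hne i hi
    have hadj : (mtGraph r f).Adj i (f i) := by
      rw [mtGraph, SimpleGraph.fromRel_adj]
      exact ⟨(hfne i hir).symm, Or.inl ⟨hir, rfl⟩⟩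
    rw [h, mtGraph, SimpleGraph.fromRel_adj] at hadj
    rcases hadj.2 with ⟨_, h2⟩ | ⟨h1, h2⟩
    · exact absurd h2 hi
    · intro h3
      rw [← h2] at h3
      -- `f (f i) = i`, a two-cycle
      have cyc : ∀ k, f^[k] i = i ∨ f^[k] i = f i := by
        intro k
        induction k with
        | zero => left; rfl
        | succ k ih =>
          rw [Function.iterate_succ_apply']
          rcases ih with ih | ih
          · right; rw [ih]
          · left; rw [ih, h3]
      obtain ⟨k, hk⟩ := hf i
      rcases cyc k with hc | hc
      · exact hir (hc.symm.trans hk)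
      · exact h1 (hc.symm.trans hk)
  have all : ∀ k, f (f^[k] i) ≠ g (f^[k] i) := by
    intro k
    induction k with
    | zero => exact hi
    | succ k ih => rw [Function.iterate_succ_apply']; exact step _ ih
  obtain ⟨k, hk⟩ := hf i
  exact hne _ (all k) hk

lemma mtGraph_surj {V : Type*} [Fintype V] (r : V) (T : SimpleGraph V)
    (hT : T.IsTree) : ∃ f : V → V, MTGood r f ∧ f r = r ∧ (∀ i, i ≠ r → T.Adj i (f i)) ∧
      mtGraph r f = T := by
  classical
  have hex : ∀ i, ∃ j, (i = r → j = r) ∧ (i ≠ r → T.Adj i j ∧ T.dist j r < T.dist i r) := by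
    intro i
    by_cases hi : i = r
    · exact ⟨r, fun _ => rfl, fun h => absurd hi h⟩
    · obtain ⟨p, hp⟩ := hT.connected.exists_walk_length_eq_dist i r
      cases p with
      | nil => exact absurd rfl hi
      | cons hadj q =>
        refine ⟨_, fun h => absurd h hi, fun _ => ⟨hadj, ?_⟩⟩
        have := SimpleGraph.dist_le q
        rw [SimpleGraph.Walk.length_cons] at hp
        omega
  choose f hf1 hf2 using hex
  have hgood : MTGood r f := by
    have : ∀ d i, T.dist i r ≤ d → ∃ k, f^[k] i = r := by
      intro d
      induction d with
      | zero =>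
        intro i h
        by_cases hi : i = r
        · exact ⟨0, hi⟩
        · have := (hf2 i hi).2; omega
      | succ d ih =>
        intro i h
        by_cases hi : i = r
        · exact ⟨0, hi⟩
        · have := (hf2 i hi).2
          obtain ⟨k, hk⟩ := ih (f i) (by omega)
          exact ⟨k + 1, by rw [Function.iterate_succ_apply]; exact hk⟩
    exact fun i => this _ i le_rfl
  refine ⟨f, hgood, hf1 r rfl, fun i hi => (hf2 i hi).1, ?_⟩
  have hle : mtGraph r f ≤ T := by
    intro a b h
    rw [mtGraph, SimpleGraph.fromRel_adj] at h
    rcases h.2 with ⟨h1, h2⟩ | ⟨h1, h2⟩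
    · rw [h2]; exact (hf2 a h1).1
    · rw [h2]; exact (hf2 b h1).1.symm
  exact le_antisymm hle
    ((SimpleGraph.isTree_iff_minimal_connected.mp hT).2 (mtGraph_isTree r f hgood).connected hle)

lemma numSpanningTrees_eq {V : Type*} (G : SimpleGraph V) :
    numSpanningTrees G = Nat.card {T : SimpleGraph V // T ≤ G ∧ T.IsTree} := by
  unfold numSpanningTrees
  refine Nat.card_congr
    { toFun := fun H => ⟨H.1.spanningCoe, H.1.spanningCoe_le,
        (SimpleGraph.Iso.isTree_iff (H.1.spanningCoeEquivCoeOfSpanning H.2.1)).mpr H.2.2⟩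
      invFun := fun T => ⟨SimpleGraph.toSubgraph T.1 T.2.1,
        SimpleGraph.toSubgraph.isSpanning T.1 T.2.1,
        (SimpleGraph.Iso.isTree_iff ((SimpleGraph.toSubgraph T.1 T.2.1).spanningCoeEquivCoeOfSpanning
          (SimpleGraph.toSubgraph.isSpanning T.1 T.2.1))).mp T.2.2⟩
      left_inv := ?_
      right_inv := ?_ }
  · rintro ⟨H, h1, h2⟩
    apply Subtype.ext
    apply SimpleGraph.Subgraph.ext
    · exact (Set.eq_univ_of_forall h1).symm
    · rfl
  · rintro ⟨T, h1, h2⟩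
    rfl

/-- The matrix-tree theorem. -/
theorem matrix_tree {V : Type*} [Fintype V] [DecidableEq V] (G : SimpleGraph V)
    [DecidableRel G.Adj] (R : Type*) [CommRing R] [IsDomain R] (r : V) :
    ((G.lapMatrix R).updateRow r (Pi.single r 1)).det = (numSpanningTrees G : R) := by
  classical
  rw [mt_det_expand, numSpanningTrees_eq]
  have h1 : ∀ f : V → V, (mtMat R r f).det = if MTGood r f then 1 else 0 := by
    intro f
    split_ifs with h
    · exact mtMat_det_good R r f h
    · exact mtMat_det_bad R r f h
  simp only [h1]
  rw [Finset.sum_boole]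
  congr 1
  have hmem : ∀ f : V → V, f ∈ Fintype.piFinset (mtNbr G r) →
      f r = r ∧ ∀ i, i ≠ r → G.Adj i (f i) := by
    intro f hf
    rw [Fintype.mem_piFinset] at hf
    constructor
    · have := hf r
      simpa [mtNbr] using this
    · intro i hi
      have := hf i
      simpa [mtNbr, hi] using this
  rw [← Fintype.card_coe, ← Nat.card_eq_fintype_card]
  refine Nat.card_congr (Equiv.ofBijective (fun f => ⟨mtGraph r f.1, ?_, ?_⟩) ⟨?_, ?_⟩)
  · obtain ⟨f, hf⟩ := f
    rw [Finset.mem_filter] at hf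
    obtain ⟨-, h3⟩ := hmem f hf.1
    intro a b h
    rw [mtGraph, SimpleGraph.fromRel_adj] at h
    rcases h.2 with ⟨h1, h2⟩ | ⟨h1, h2⟩
    · rw [h2]; exact h3 a h1
    · rw [h2]; exact (h3 b h1).symm
  · exact mtGraph_isTree r f.1 (Finset.mem_filter.mp f.2).2
  · rintro ⟨f, hf⟩ ⟨g, hg⟩ h
    rw [Finset.mem_filter] at hf hg
    apply Subtype.ext
    refine mtGraph_inj r f g hf.2 (hmem f hf.1).1 (hmem g hg.1).1 ?_ (congrArg Subtype.val h)
    intro i hi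
    exact ((hmem f hf.1).2 i hi).ne'
  · rintro ⟨T, hTG, hT⟩
    obtain ⟨f, hf1, hf2, hf3, hf4⟩ := mtGraph_surj r T hT
    refine ⟨⟨f, ?_⟩, Subtype.ext hf4⟩
    rw [Finset.mem_filter]
    refine ⟨?_, hf1⟩
    rw [Fintype.mem_piFinset]
    intro i
    by_cases hi : i = r
    · simp [mtNbr, hi, hf2]
    · simpa [mtNbr, hi] using hTG (hf3 i hi)

lemma gp_rank_one {V R : Type*} [Fintype V] [DecidableEq V] [CommRing R] [IsDomain R]
    (M : Matrix V V R) (hrow : ∀ i, ∑ j, M i j = 0) (hcol : ∀ j, ∑ i, M i j = 0)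
    (u v : V → R) (r : V) :
    (M + Matrix.vecMulVec u v).det =
      (∑ i, u i) * (∑ i, v i) * (M.updateRow r (Pi.single r 1)).det := by
  have s1 : (M + Matrix.vecMulVec u v).det =
      ((M + Matrix.vecMulVec u v).updateRow r ((∑ i, u i) • v)).det := by
    have := Matrix.det_updateRow_sum (M + Matrix.vecMulVec u v) r (fun _ => 1)
    rw [one_smul] at this
    rw [← this]
    congr 2
    funext j
    refine (Finset.sum_apply _ _ _).trans ?_
    simp only [Pi.smul_apply, one_mul, Matrix.add_apply,
      Matrix.vecMulVec_apply, Finset.sum_add_distrib, hcol, zero_add, smul_eq_mul,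
      Finset.sum_mul]
  have s2 : ((M + Matrix.vecMulVec u v).updateRow r v).det = (M.updateRow r v).det := by
    refine Matrix.det_eq_of_forall_row_eq_smul_add_const (fun i => if i = r then 0 else u i) r
      (by simp) ?_
    intro i j
    by_cases h : i = r
    · subst h; simp
    · simp [h, Matrix.updateRow_ne h, Matrix.vecMulVec_apply]
  have s3 : (M.updateRow r (v - (∑ i, v i) • Pi.single r 1)).det = 0 := by
    rw [← Matrix.exists_mulVec_eq_zero_iff]
    refine ⟨1, ?_, ?_⟩
    · intro h
      exact one_ne_zero (congrFun h r)
    · funext i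
      rw [Matrix.mulVec, dotProduct_one, Pi.zero_apply]
      by_cases h : i = r
      · subst h
        simp [Finset.sum_sub_distrib, ← Finset.mul_sum]
      · simp only [Matrix.updateRow_ne h, hrow]
  have s4 : (M.updateRow r v).det = (∑ i, v i) * (M.updateRow r (Pi.single r 1)).det := by
    rw [← Matrix.det_updateRow_smul]
    have := Matrix.det_updateRow_add M r (v - (∑ i, v i) • Pi.single r 1)
      ((∑ i, v i) • Pi.single r 1)
    rw [sub_add_cancel, s3, zero_add] at this
    exact this
  rw [s1, Matrix.det_updateRow_smul, s2, s4, mul_assoc]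

/-- The shift-by-`t` matrix. -/
def gpT (n : ℕ) (t : ZMod n) : Matrix (ZMod n) (ZMod n) ℂ :=
  fun i j => if j = i + t then 1 else 0

lemma gpT_zero (n : ℕ) [NeZero n] : gpT n 0 = 1 := by
  ext i j
  simp [gpT, Matrix.one_apply, eq_comm]

lemma gpT_mul (n : ℕ) [NeZero n] (s t : ZMod n) : gpT n (s + t) = gpT n s * gpT n t := by
  ext i j
  simp only [gpT, Matrix.mul_apply, ite_mul, one_mul, zero_mul, Finset.sum_ite_eq',
    Finset.sum_ite_eq, Finset.mem_univ, if_true, add_assoc]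

/-- The representation of the group algebra by circulant matrices. -/
noncomputable def gpPhi (n : ℕ) [NeZero n] :
    AddMonoidAlgebra ℂ (ZMod n) →ₐ[ℂ] Matrix (ZMod n) (ZMod n) ℂ :=
  AddMonoidAlgebra.lift ℂ (Matrix (ZMod n) (ZMod n) ℂ) (ZMod n)
    { toFun := fun t => gpT n t.toAdd
      map_one' := gpT_zero n
      map_mul' := fun s t => gpT_mul n s.toAdd t.toAdd }

/-- generator -/
noncomputable def gpc (n : ℕ) (t : ZMod n) : AddMonoidAlgebra ℂ (ZMod n) :=
  AddMonoidAlgebra.single t 1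

lemma gpc_zero (n : ℕ) : gpc n 0 = 1 := rfl

lemma gpc_mul (n : ℕ) (s t : ZMod n) : gpc n s * gpc n t = gpc n (s + t) := by
  simp [gpc, AddMonoidAlgebra.single_mul_single]

lemma gpPhi_c (n : ℕ) [NeZero n] (t : ZMod n) : gpPhi n (gpc n t) = gpT n t := by
  simp [gpPhi, gpc]

/-- sum of group elements -/
noncomputable def gpj (n : ℕ) [NeZero n] : AddMonoidAlgebra ℂ (ZMod n) := ∑ t, gpc n t

lemma gpc_mul_j (n : ℕ) [NeZero n] (s : ZMod n) : gpc n s * gpj n = gpj n := by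
  rw [gpj, Finset.mul_sum]
  simp only [gpc_mul]
  exact Fintype.sum_equiv (Equiv.addLeft s) _ _ (fun _ => rfl)

lemma gpj_mul_j (n : ℕ) [NeZero n] : gpj n * gpj n = n * gpj n := by
  conv_lhs => enter [1]; rw [gpj]
  rw [Finset.sum_mul]
  simp only [gpc_mul_j]
  simp

lemma gpPhi_j (n : ℕ) [NeZero n] : gpPhi n (gpj n) = Matrix.of (fun _ _ => 1) := by
  ext i j
  simp only [gpj, map_sum, gpPhi_c, Matrix.sum_apply, gpT, Matrix.of_apply]
  rw [Finset.sum_eq_single (j - i)]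
  · simp
  · intro b _ hb
    rw [if_neg]
    rintro rfl
    exact hb (by ring)
  · simp

/-- determinant character -/
noncomputable def gpDelta (n : ℕ) [NeZero n] (x : AddMonoidAlgebra ℂ (ZMod n)) : ℂ :=
  (gpPhi n x).det

lemma gpDelta_mul (n : ℕ) [NeZero n] (x y : AddMonoidAlgebra ℂ (ZMod n)) :
    gpDelta n (x * y) = gpDelta n x * gpDelta n y := by
  simp [gpDelta]

lemma gpT_charpoly (n : ℕ) [NeZero n] :
    (gpT n 1).charpoly = Polynomial.X ^ n - Polynomial.C 1 := by
  have hn : n ≠ 0 := NeZero.ne n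
  have hprim := Complex.isPrimitiveRoot_exp n hn
  have hmon : (Polynomial.X ^ n - Polynomial.C (1 : ℂ)).Monic :=
    Polynomial.monic_X_pow_sub_C 1 hn
  refine (Polynomial.eq_of_monic_of_dvd_of_natDegree_le hmon
    (Matrix.charpoly_monic _) ?_ ?_)
  · rw [Polynomial.C_1, Polynomial.X_pow_sub_one_eq_prod (Nat.pos_of_ne_zero hn) hprim]
    refine Finset.prod_dvd_of_coprime ?_ ?_
    · intro a _ b _ hab
      exact Polynomial.pairwise_coprime_X_sub_C Function.injective_id hab
    · intro w hw
      rw [Polynomial.mem_nthRootsFinset (Nat.pos_of_ne_zero hn)] at hw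
      rw [Polynomial.dvd_iff_isRoot, Polynomial.IsRoot, Matrix.eval_charpoly,
        ← Matrix.exists_mulVec_eq_zero_iff]
      refine ⟨fun i => w ^ i.val, ?_, ?_⟩
      · intro h
        have := congrFun h 0
        simp at this
      · funext i
        have h1 : w ^ (i + 1).val = w ^ (i.val + 1) := by
          rw [ZMod.val_add, ← pow_eq_pow_mod _ hw, pow_add, pow_add]
          congr 1
          rw [ZMod.val_one_eq_one_mod, ← pow_eq_pow_mod _ hw]
        have h2 : (gpT n 1).mulVec (fun i => w ^ i.val) i = w ^ (i + 1).val := by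
          simp [Matrix.mulVec, dotProduct, gpT]
        rw [Matrix.sub_mulVec, Pi.sub_apply, h2, h1]
        simp [Matrix.scalar_apply, Matrix.mulVec_diagonal, pow_succ, mul_comm]
  · rw [Matrix.charpoly_natDegree_eq_dim, Polynomial.natDegree_X_pow_sub_C, ZMod.card]

lemma gpDelta_lin (n : ℕ) [NeZero n] (z : ℂ) :
    gpDelta n (gpc n 1 - algebraMap ℂ _ z) = (-1) ^ n * (z ^ n - 1) := by
  have h := congrArg (Polynomial.eval z) (gpT_charpoly n)
  rw [Matrix.eval_charpoly] at h
  simp only [Polynomial.eval_sub, Polynomial.eval_pow, Polynomial.eval_X, Polynomial.eval_C] at h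
  rw [← h, gpDelta, map_sub, gpPhi_c, AlgHom.commutes, ← neg_sub, Matrix.det_neg, ZMod.card]
  rfl

lemma gpDelta_c (n : ℕ) [NeZero n] : gpDelta n (gpc n 1) = - (-1) ^ n := by
  have := gpDelta_lin n 0
  rw [map_zero, sub_zero, zero_pow (NeZero.ne n)] at this
  rw [this]; ring

lemma gpDelta_d (n : ℕ) [NeZero n] : gpDelta n (gpc n (-1)) = - (-1) ^ n := by
  have h1 : gpDelta n (gpc n 1) * gpDelta n (gpc n (-1)) = 1 := by
    rw [← gpDelta_mul, gpc_mul, add_neg_cancel, gpDelta, gpPhi_c, gpT_zero, Matrix.det_one]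
  rw [gpDelta_c] at h1
  have h2 : ((-1 : ℂ) ^ n) * (-1) ^ n = 1 := by rw [← mul_pow]; simp
  linear_combination (-(-1) ^ n) * h1 - gpDelta n (gpc n (-1)) * h2

lemma gpDelta_quad (n : ℕ) [NeZero n] (z z' w : ℂ) (h : z * z' = 1) (hw : z + z' = w) :
    gpDelta n (gpc n 1 + gpc n (-1) - algebraMap ℂ _ w) = - (-1) ^ n * (2 - z ^ n - z' ^ n) := by
  have hcd : gpc n 1 * gpc n (-1) = 1 := by rw [gpc_mul, add_neg_cancel, gpc_zero]
  have hz : algebraMap ℂ (AddMonoidAlgebra ℂ (ZMod n)) z * algebraMap ℂ _ z' = 1 := by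
    rw [← map_mul, h, map_one]
  have e : gpc n 1 + gpc n (-1) - algebraMap ℂ _ w =
      gpc n (-1) * ((gpc n 1 - algebraMap ℂ _ z) * (gpc n 1 - algebraMap ℂ _ z')) := by
    rw [← hw, map_add]
    linear_combination (-gpc n 1 + algebraMap ℂ _ z + algebraMap ℂ _ z') * hcd - gpc n (-1) * hz
  rw [e, gpDelta_mul, gpDelta_mul, gpDelta_lin, gpDelta_lin, gpDelta_d]
  have h2 : ((-1 : ℂ) ^ n) * (-1) ^ n = 1 := by rw [← mul_pow]; simp
  have h3 : z ^ n * z' ^ n = 1 := by rw [← mul_pow, h, one_pow]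
  linear_combination (-(-1) ^ n * (z ^ n - 1) * (z' ^ n - 1)) * h2 - (-1) ^ n * h3

lemma gpDelta_unit (n : ℕ) [NeZero n] :
    gpDelta n (1 - gpc n 1 + gpj n) = n ^ 2 := by
  have e : gpPhi n (1 - gpc n 1 + gpj n) =
      (1 - gpT n 1) + Matrix.vecMulVec (fun _ => 1) (fun _ => 1) := by
    rw [map_add, map_sub, map_one, gpPhi_c, gpPhi_j]
    congr 1
    ext i j
    simp [Matrix.vecMulVec_apply]
  rw [gpDelta, e, gp_rank_one _ ?_ ?_ _ _ 0]
  · have : (1 - gpT n 1).updateRow 0 (Pi.single 0 1) = mtMat ℂ (0 : ZMod n) (fun i => i + 1) := by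
      ext i j
      by_cases h : i = 0
      · subst h; simp [mtMat]
      · rw [Matrix.updateRow_ne h]
        simp [mtMat, h, gpT, Matrix.one_apply, Pi.single_apply, eq_comm]
    rw [this, mtMat_det_good]
    · simp [ZMod.card, sq]
    · intro i
      refine ⟨(-i).val, ?_⟩
      have : ∀ k : ℕ, (fun i : ZMod n => i + 1)^[k] i = i + k := by
        intro k
        induction k with
        | zero => simp
        | succ k ih => rw [Function.iterate_succ_apply', ih]; push_cast; ring
      rw [this, ZMod.natCast_zmod_val, add_neg_cancel]
  · intro i
    simp [Matrix.sub_apply, gpT, Matrix.one_apply, Finset.sum_sub_distrib]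
  · intro j
    have : ∀ i : ZMod n, (j = i + 1) ↔ i = j - 1 := fun i =>
      ⟨fun h => by rw [h]; ring, fun h => by rw [h]; ring⟩
    simp [Matrix.sub_apply, gpT, Matrix.one_apply, Finset.sum_sub_distrib, this]

lemma gp_natCast_ne (n : ℕ) (hn : 9 ≤ n) (m : ℕ) (h0 : 0 < m) (hm : m < 9) : (m : ZMod n) ≠ 0 := by
  intro h
  rw [ZMod.natCast_eq_zero_iff] at h
  have := Nat.le_of_dvd h0 h
  omega

lemma gp_adj_block (n : ℕ) (k : ℕ) (h1 : (k : ZMod n) ≠ 0) (h2 : (k : ZMod n) + k ≠ 0)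
    (i j : ZMod n) :
    (if i ≠ j ∧ (j = i + k ∨ i = j + k) then (1 : ℂ) else 0) = gpT n k i j + gpT n (-k) i j := by
  unfold gpT
  have e : j = i + -k ↔ i = j + k := ⟨fun h => by rw [h]; ring, fun h => by rw [h]; ring⟩
  simp only [e]
  by_cases ha : j = i + k
  · have hb : ¬ i = j + k := by
      intro hb
      rw [ha] at hb
      apply h2
      linear_combination -hb
    have hc : i ≠ j := by
      intro hc
      rw [hc] at ha
      apply h1
      linear_combination -ha
    rw [if_pos ⟨hc, Or.inl ha⟩, if_pos ha, if_neg hb, add_zero]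
  · by_cases hb : i = j + k
    · have hc : i ≠ j := by
        intro hc
        rw [hc] at hb
        apply h1
        linear_combination -hb
      rw [if_pos ⟨hc, Or.inr hb⟩, if_neg ha, if_pos hb, zero_add]
    · rw [if_neg, if_neg ha, if_neg hb, zero_add]
      rintro ⟨_, h | h⟩
      · exact ha h
      · exact hb h

lemma gp_adjMatrix (n : ℕ) [NeZero n] (hn : 9 ≤ n) :
    (genPetersen n 4).adjMatrix ℂ =
      Matrix.fromBlocks (gpT n 1 + gpT n (-1)) 1 1 (gpT n 4 + gpT n (-4)) := by
  have a1 := gp_natCast_ne n hn 1 (by norm_num) (by norm_num)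
  have a2 := gp_natCast_ne n hn 2 (by norm_num) (by norm_num)
  have a4 := gp_natCast_ne n hn 4 (by norm_num) (by norm_num)
  have a8 := gp_natCast_ne n hn 8 (by norm_num) (by norm_num)
  ext x y
  rw [SimpleGraph.adjMatrix_apply]
  rcases x with i | i <;> rcases y with j | j
  · have := gp_adj_block n 1 a1 (by intro h; apply a2; push_cast at h ⊢; linear_combination h) i j
    rw [Matrix.fromBlocks_apply₁₁, Matrix.add_apply]
    rw [Nat.cast_one] at this
    rw [← this]
    simp only [genPetersen, SimpleGraph.fromRel_adj, gpRel, ne_eq, Sum.inl.injEq]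
  · simp [genPetersen, SimpleGraph.fromRel_adj, gpRel, Matrix.one_apply, eq_comm]
  · simp [genPetersen, SimpleGraph.fromRel_adj, gpRel, Matrix.one_apply, eq_comm]
  · have := gp_adj_block n 4 a4 (by intro h; apply a8; push_cast at h ⊢; linear_combination h) i j
    rw [Matrix.fromBlocks_apply₂₂, Matrix.add_apply]
    have e : ((4 : ℕ) : ZMod n) = 4 := by norm_cast
    rw [e] at this
    rw [← this]
    simp only [genPetersen, SimpleGraph.fromRel_adj, gpRel, ne_eq, Sum.inr.injEq, e]

lemma gpT_row_sum (n : ℕ) [NeZero n] (t i : ZMod n) : ∑ j, gpT n t i j = 1 := by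
  simp [gpT]

lemma gp_lapMatrix (n : ℕ) [NeZero n] (hn : 9 ≤ n) :
    (genPetersen n 4).lapMatrix ℂ =
      Matrix.fromBlocks (gpPhi n (3 - gpc n 1 - gpc n (-1))) (-1) (-1)
        (gpPhi n (3 - gpc n 4 - gpc n (-4))) := by
  have hdeg : ∀ x, ((genPetersen n 4).degree x : ℂ) = 3 := by
    intro x
    have := SimpleGraph.adjMatrix_mulVec_const_apply (G := genPetersen n 4) (a := (1 : ℂ)) (v := x)
    rw [mul_one] at this
    rw [← this, gp_adjMatrix n hn, Matrix.mulVec, dotProduct, Fintype.sum_sum_type]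
    rcases x with i | i
    · simp [Finset.sum_add_distrib, gpT_row_sum, Matrix.one_apply]
      norm_num
    · simp [Finset.sum_add_distrib, gpT_row_sum, Matrix.one_apply]
      norm_num
  have hD : (genPetersen n 4).degMatrix ℂ = Matrix.fromBlocks 3 0 0 3 := by
    ext x y
    simp only [SimpleGraph.degMatrix, Matrix.diagonal_apply, hdeg]
    have h3 : (3 : Matrix (ZMod n) (ZMod n) ℂ) = Matrix.diagonal (fun _ => 3) := rfl
    rcases x with i | i <;> rcases y with j | j <;>
      simp [h3, Matrix.diagonal_apply]
  rw [SimpleGraph.lapMatrix, hD, gp_adjMatrix n hn]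
  rw [map_sub, map_sub, map_sub, map_sub, map_ofNat, gpPhi_c, gpPhi_c, gpPhi_c, gpPhi_c]
  simp only [sub_eq_add_neg, Matrix.fromBlocks_neg,
    Matrix.fromBlocks_add, zero_add, neg_add, add_assoc]

lemma gp_block_det (n : ℕ) [NeZero n] (A B Y : Matrix (ZMod n) (ZMod n) ℂ) :
    (Matrix.fromBlocks A Y (-1) B).det = (A * B + Y).det := by
  have h1 : Matrix.fromBlocks A Y (-1) B * (Matrix.fromBlocks 1 (B - 1) 0 1 *
      (Matrix.fromBlocks 1 0 1 1 * Matrix.fromBlocks 1 (-1) 0 1)) =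
      Matrix.fromBlocks (A * B + Y) (-A) 0 1 := by
    simp only [Matrix.fromBlocks_multiply]
    congr 1 <;> noncomm_ring
  have h2 := congrArg Matrix.det h1
  rw [Matrix.det_mul, Matrix.det_mul, Matrix.det_mul, Matrix.det_fromBlocks_zero₂₁,
    Matrix.det_fromBlocks_zero₂₁, Matrix.det_fromBlocks_zero₂₁, Matrix.det_fromBlocks_zero₁₂] at h2
  simpa using h2

lemma gp_tau_delta (n : ℕ) [NeZero n] (hn : 9 ≤ n) :
    (numSpanningTrees (genPetersen n 4) : ℂ) * (-17 * n ^ 3) =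
      gpDelta n ((3 - gpc n 1 - gpc n (-1)) * (3 - gpc n 4 - gpc n (-4)) - 1 - 17 * n * gpj n) := by
  have hr : ∀ i, ∑ j, (genPetersen n 4).lapMatrix ℂ i j = 0 := by
    intro i
    have := congrFun (SimpleGraph.lapMatrix_mulVec_const_eq_zero (R := ℂ) (genPetersen n 4)) i
    simpa [Matrix.mulVec, dotProduct] using this
  have hc : ∀ j, ∑ i, (genPetersen n 4).lapMatrix ℂ i j = 0 := by
    intro j
    rw [← hr j]
    refine Finset.sum_congr rfl fun i _ => ?_
    exact ((genPetersen n 4).isSymm_lapMatrix (R := ℂ)).apply j i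
  have h := gp_rank_one ((genPetersen n 4).lapMatrix ℂ) hr hc (Sum.elim (fun _ => 1) (fun _ => 0))
    (Sum.elim (fun _ => 0) (fun _ => -17 * n)) (Sum.inl 0)
  rw [matrix_tree] at h
  have e : (genPetersen n 4).lapMatrix ℂ + Matrix.vecMulVec
      (Sum.elim (fun _ => 1) (fun _ => 0)) (Sum.elim (fun _ => 0) (fun _ => -17 * (n : ℂ))) =
      Matrix.fromBlocks (gpPhi n (3 - gpc n 1 - gpc n (-1)))
        (-1 + (-17 * (n : ℂ)) • Matrix.of (fun _ _ => 1)) (-1)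
        (gpPhi n (3 - gpc n 4 - gpc n (-4))) := by
    rw [gp_lapMatrix n hn]
    ext x y
    rcases x with i | i <;> rcases y with j | j <;> simp [Matrix.vecMulVec_apply]
  rw [e, gp_block_det] at h
  have e2 : gpPhi n (3 - gpc n 1 - gpc n (-1)) * gpPhi n (3 - gpc n 4 - gpc n (-4)) +
      (-1 + (-17 * (n : ℂ)) • Matrix.of (fun _ _ => 1)) =
      gpPhi n ((3 - gpc n 1 - gpc n (-1)) * (3 - gpc n 4 - gpc n (-4)) - 1 - 17 * n * gpj n) := by
    rw [← gpPhi_j, ← map_mul, ← map_smul, ← map_one (gpPhi n), ← map_neg, ← map_add, ← map_add]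
    congr 1
    rw [Algebra.smul_def, map_mul, map_neg, map_ofNat, map_natCast]
    ring
  rw [e2] at h
  rw [gpDelta, h]
  simp [Fintype.sum_sum_type, ZMod.card]
  ring

lemma gp_factor {S : Type*} [CommRing S] (c d j N w1 w2 w3 w4 : S) (hcd : c * d = 1)
    (hcj : c * j = j) (hdj : d * j = j) (hjj : j * j = N * j)
    (e1 : w1 + w2 + w3 + w4 = 1)
    (e2 : w1 * w2 + w1 * w3 + w1 * w4 + w2 * w3 + w2 * w4 + w3 * w4 = -6)
    (e3 : w1 * w2 * w3 + w1 * w2 * w4 + w1 * w3 * w4 + w2 * w3 * w4 = 0)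
    (e4 : w1 * w2 * w3 * w4 = -1) :
    (3 - c - d) * (3 - c ^ 4 - d ^ 4) - 1 - 17 * N * j =
      (1 - c + j) * (1 - c + j) * d *
        ((c + d - w1) * (c + d - w2) * (c + d - w3) * (c + d - w4)) := by
  have hR : ∀ W : S, (W - w1) * (W - w2) * (W - w3) * (W - w4) = W ^ 4 - W ^ 3 - 6 * W ^ 2 - 1 := by
    intro W
    linear_combination (-W ^ 3) * e1 + W ^ 2 * e2 - W * e3 + e4
  have hf : (1 - c + j) * (1 - c + j) * d = c + d - 2 + N * j := by
    have h1 : (1 - c) * j = 0 := by linear_combination -hcj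
    linear_combination (2 * d) * h1 + (c - 2) * hcd + d * hjj + N * hdj
  have hW : j * (c + d) = 2 * j := by linear_combination hcj + hdj
  have hj : j * ((c + d) ^ 4 - (c + d) ^ 3 - 6 * (c + d) ^ 2 - 1) = -17 * j := by
    have p2 : j * (c + d) ^ 2 = 4 * j := by linear_combination (c + d + 2) * hW
    have p3 : j * (c + d) ^ 3 = 8 * j := by linear_combination (c + d) * p2 + 4 * hW
    have p4 : j * (c + d) ^ 4 = 16 * j := by linear_combination (c + d) * p3 + 8 * hW
    linear_combination p4 - p3 - 6 * p2
  have hc4 : c ^ 4 + d ^ 4 = (c + d) ^ 4 - 4 * (c + d) ^ 2 + 2 := by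
    linear_combination (-4 * c ^ 2 - 6 * c * d - 4 * d ^ 2 + 2) * hcd
  rw [hR, hf]
  linear_combination (-N) * hj - (3 - c - d) * hc4

lemma gp_roots : ∃ w1 w2 w3 w4 : ℂ, w1 + w2 + w3 + w4 = 1 ∧
    w1 * w2 + w1 * w3 + w1 * w4 + w2 * w3 + w2 * w4 + w3 * w4 = -6 ∧
    w1 * w2 * w3 + w1 * w2 * w4 + w1 * w3 * w4 + w2 * w3 * w4 = 0 ∧
    w1 * w2 * w3 * w4 = -1 := by
  have q4 : ∃ x : ℂ, x ^ 4 - x ^ 3 - 6 * x ^ 2 - 1 = 0 := by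
    have hd : (X ^ 4 - X ^ 3 - C 6 * X ^ 2 - 1 : ℂ[X]).degree = 4 := by compute_degree!
    obtain ⟨x, hx⟩ := IsAlgClosed.exists_root (X ^ 4 - X ^ 3 - C 6 * X ^ 2 - 1 : ℂ[X])
      (by rw [hd]; norm_num)
    exact ⟨x, by simpa [IsRoot] using hx⟩
  have q3 : ∀ b c d : ℂ, ∃ x : ℂ, x ^ 3 + b * x ^ 2 + c * x + d = 0 := by
    intro b c d
    have hd : (X ^ 3 + C b * X ^ 2 + C c * X + C d : ℂ[X]).degree = 3 := by compute_degree!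
    obtain ⟨x, hx⟩ := IsAlgClosed.exists_root (X ^ 3 + C b * X ^ 2 + C c * X + C d : ℂ[X])
      (by rw [hd]; norm_num)
    exact ⟨x, by simpa [IsRoot] using hx⟩
  have q2 : ∀ b c : ℂ, ∃ x : ℂ, x ^ 2 + b * x + c = 0 := by
    intro b c
    have hd : (X ^ 2 + C b * X + C c : ℂ[X]).degree = 2 := by compute_degree!
    obtain ⟨x, hx⟩ := IsAlgClosed.exists_root (X ^ 2 + C b * X + C c : ℂ[X])
      (by rw [hd]; norm_num)
    exact ⟨x, by simpa [IsRoot] using hx⟩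
  obtain ⟨x, hx⟩ := q4
  obtain ⟨y, hy⟩ := q3 (x - 1) (x ^ 2 - x - 6) (x ^ 3 - x ^ 2 - 6 * x)
  obtain ⟨z, hz⟩ := q2 (x + y - 1) (x ^ 2 + x * y + y ^ 2 - x - y - 6)
  refine ⟨x, y, z, 1 - x - y - z, by ring, ?_, ?_, ?_⟩
  · linear_combination -hz
  · linear_combination hy - (x + y) * hz
  · linear_combination (-x * y) * hz + x * hy - hx

lemma gp_sqrt (w : ℂ) : ∃ s r : ℂ, s * r = 1 ∧ w = s ^ 2 + r ^ 2 := by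
  obtain ⟨d, hd⟩ := IsAlgClosed.exists_pow_nat_eq (w ^ 2 - 4) (n := 2) (by norm_num)
  obtain ⟨s, hs⟩ := IsAlgClosed.exists_pow_nat_eq ((w + d) / 2) (n := 2) (by norm_num)
  have h1 : s ^ 2 * ((w - d) / 2) = 1 := by
    rw [hs]; linear_combination (-1 / 4) * hd
  have hs0 : s ≠ 0 := by
    rintro rfl; norm_num at h1
  refine ⟨s, s⁻¹, mul_inv_cancel₀ hs0, ?_⟩
  have h2 : s⁻¹ ^ 2 = (w - d) / 2 := by
    rw [inv_pow]; exact inv_eq_of_mul_eq_one_right h1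
  rw [h2, hs]; ring

/-- With `a : ℕ → ℤ` the sequence with initial values
`(a(0), …, a(15)) = (−83, 35, −19, 1, −5, 1, −1, 0, 1, 1, 5, 1, 19, 35, 83, 73)`
satisfying the recurrence below, `τ(GP(n,4)) = n·a(n+7)²` for all `n ≥ 9`. -/
theorem spanning_trees_GP4_recurrence (a : ℕ → ℤ)
    (h0 : a 0 = -83) (h1 : a 1 = 35) (h2 : a 2 = -19) (h3 : a 3 = 1)
    (h4 : a 4 = -5) (h5 : a 5 = 1) (h6 : a 6 = -1) (h7 : a 7 = 0)
    (h8 : a 8 = 1) (h9 : a 9 = 1) (h10 : a 10 = 5) (h11 : a 11 = 1)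
    (h12 : a 12 = 19) (h13 : a 13 = 35) (h14 : a 14 = 83) (h15 : a 15 = 73)
    (hrec : ∀ n : ℕ,
      a (n + 16) - a (n + 15) - 2 * a (n + 13) - 16 * a (n + 12) + 10 * a (n + 11)
        - 2 * a (n + 10) + 16 * a (n + 9) + 50 * a (n + 8) - 16 * a (n + 7)
        - 2 * a (n + 6) - 10 * a (n + 5) - 16 * a (n + 4) + 2 * a (n + 3)
        + a (n + 1) + a n = 0) :
    ∀ n : ℕ, 9 ≤ n →
      (numSpanningTrees (genPetersen n 4) : ℤ) = n * a (n + 7) ^ 2 := by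
  intro n hn
  have : NeZero n := ⟨by omega⟩
  obtain ⟨w1, w2, w3, w4, e1, e2, e3, e4⟩ := gp_roots
  obtain ⟨s1, r1, g1, k1⟩ := gp_sqrt w1
  obtain ⟨s2, r2, g2, k2⟩ := gp_sqrt w2
  obtain ⟨s3, r3, g3, k3⟩ := gp_sqrt w3
  obtain ⟨s4, r4, g4, k4⟩ := gp_sqrt w4
  have hcl := gp_closed s1 s2 s3 s4 r1 r2 r3 r4 g1 g2 g3 g4 w1 w2 w3 w4 k1 k2 k3 k4 e1 e2 e3 e4
    a h0 h1 h2 h3 h4 h5 h6 h7 h8 h9 h10 h11 h12 h13 h14 h15 hrec n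
  have htau := gp_tau_delta n hn
  let f := algebraMap ℂ (AddMonoidAlgebra ℂ (ZMod n))
  have hc4 : gpc n 4 = gpc n 1 ^ 4 := by
    rw [show (4 : ZMod n) = 1 + 1 + 1 + 1 by norm_num, ← gpc_mul, ← gpc_mul, ← gpc_mul]; ring
  have hd4 : gpc n (-4) = gpc n (-1) ^ 4 := by
    rw [show (-4 : ZMod n) = -1 + -1 + -1 + -1 by norm_num, ← gpc_mul, ← gpc_mul, ← gpc_mul]; ring
  have hfac := gp_factor (gpc n 1) (gpc n (-1)) (gpj n) (n : AddMonoidAlgebra ℂ (ZMod n))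
    (f w1) (f w2) (f w3) (f w4)
    (by rw [gpc_mul, add_neg_cancel, gpc_zero]) (gpc_mul_j n 1) (gpc_mul_j n (-1)) (gpj_mul_j n)
    (by simp only [← map_add, e1, map_one])
    (by simp only [← map_add, ← map_mul, e2, map_neg, map_ofNat])
    (by simp only [← map_add, ← map_mul, e3, map_zero])
    (by simp only [← map_mul, e4, map_neg, map_one])
  have sq : ∀ s r : ℂ, s * r = 1 → s ^ 2 * r ^ 2 = 1 := by
    intro s r h
    rw [← mul_pow, h, one_pow]
  rw [hc4, hd4, hfac] at htau
  simp only [gpDelta_mul, gpDelta_unit, gpDelta_d, f] at htau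
  rw [gpDelta_quad n _ _ w1 (sq _ _ g1) k1.symm, gpDelta_quad n _ _ w2 (sq _ _ g2) k2.symm,
    gpDelta_quad n _ _ w3 (sq _ _ g3) k3.symm, gpDelta_quad n _ _ w4 (sq _ _ g4) k4.symm] at htau
  have hn0 : (-17 * (n : ℂ) ^ 3) ≠ 0 := by
    have : (n : ℂ) ≠ 0 := by exact_mod_cast NeZero.ne n
    simp [this]
  have hsg : ((-1 : ℂ) ^ n) * (-1) ^ n = 1 := by rw [← mul_pow]; simp
  have hfin : (numSpanningTrees (genPetersen n 4) : ℂ) = n * (a (n + 7) : ℂ) ^ 2 := by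
    apply mul_right_cancel₀ hn0
    rw [htau]
    generalize (-1 : ℂ) ^ n = e at *
    have he6 : e ^ 6 = 1 := by linear_combination (e ^ 4 + e ^ 2 + 1) * hsg
    linear_combination (n : ℂ) ^ 4 * e ^ 5 * hcl - 17 * (n : ℂ) ^ 4 * (a (n + 7) : ℂ) ^ 2 * he6
  exact_mod_cast hfin
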